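/- Let A be a cyclic Nakayama algebra and S a simple module. Then a(S) is finite if and only if pd S is odd, and in that case pd S = 2·a(S) − 1 (in particular pd S < 2·a(S)). If a(S) is infinite, then pd IS is even and pd IS ≤ 2·a(A). -/

import Mathlib

open CategoryTheory CategoryTheory.Limits

noncomputable section

namespace ArtinAlg

variable (A : Type) [Ring A]

/-- `M` admits a projective resolution of length at most `n`. -/
inductive ProjDimLE : ℕ → ModuleCat.{0} A → Prop
  | zero (M : ModuleCat.{0} A) (h : Projective M) : ProjDimLE 0 M
  | succ (n : ℕ) (M P : ModuleCat.{0} A) (f : P ⟶ M) (hP : Projective P) (hf : Epi f)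
      (h : ProjDimLE n (kernel f)) : ProjDimLE (n + 1) M

/-- `M` admits an injective coresolution of length at most `n`. -/
inductive InjDimLE : ℕ → ModuleCat.{0} A → Prop
  | zero (M : ModuleCat.{0} A) (h : Injective M) : InjDimLE 0 M
  | succ (n : ℕ) (M I : ModuleCat.{0} A) (f : M ⟶ I) (hI : Injective I) (hf : Mono f)
      (h : InjDimLE n (cokernel f)) : InjDimLE (n + 1) M

/-- The projective dimension `pd M ∈ ℕ∞`. -/
def projDim (M : ModuleCat.{0} A) : ℕ∞ :=
  sInf {d : ℕ∞ | ∃ n : ℕ, d = n ∧ ProjDimLE A n M}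

/-- The injective dimension `id M ∈ ℕ∞`. -/
def injDim (M : ModuleCat.{0} A) : ℕ∞ :=
  sInf {d : ℕ∞ | ∃ n : ℕ, d = n ∧ InjDimLE A n M}

/-- `f : P ⟶ M` is a projective cover: `P` is projective and `f` is an essential
(superfluous) epimorphism. -/
def IsProjectiveCoverHom {P M : ModuleCat.{0} A} (f : P ⟶ M) : Prop :=
  Projective P ∧ Epi f ∧ ∀ (N : ModuleCat.{0} A) (g : N ⟶ P), Epi (g ≫ f) → Epi g

/-- `P` is a projective cover of `M`. -/
def IsProjCoverOf (M P : ModuleCat.{0} A) : Prop :=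
  ∃ f : P ⟶ M, IsProjectiveCoverHom A f

/-- `f : M ⟶ I` is an injective envelope: `I` is injective and `f` is an essential
monomorphism. -/
def IsInjectiveEnvelopeHom {M I : ModuleCat.{0} A} (f : M ⟶ I) : Prop :=
  Injective I ∧ Mono f ∧ ∀ (N : ModuleCat.{0} A) (g : I ⟶ N), Mono (f ≫ g) → Mono g

/-- `I` is an injective envelope of `M`. -/
def IsInjEnvOf (M I : ModuleCat.{0} A) : Prop :=
  ∃ f : M ⟶ I, IsInjectiveEnvelopeHom A f

/-- `X ≅ Ω M`, the kernel of a projective cover of `M`. -/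
def IsSyzygyOf (M X : ModuleCat.{0} A) : Prop :=
  ∃ (P : ModuleCat.{0} A) (f : P ⟶ M), IsProjectiveCoverHom A f ∧ Nonempty (X ≅ kernel f)

/-- `X ≅ Σ M`, the cokernel of an injective envelope of `M`. -/
def IsCosyzygyOf (M X : ModuleCat.{0} A) : Prop :=
  ∃ (I : ModuleCat.{0} A) (f : M ⟶ I), IsInjectiveEnvelopeHom A f ∧ Nonempty (X ≅ cokernel f)

/-- `X ≅ Ω^n M`. -/
def IsNthSyzygy : ℕ → ModuleCat.{0} A → ModuleCat.{0} A → Prop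
  | 0, M, X => Nonempty (X ≅ M)
  | n + 1, M, X => ∃ Y, IsSyzygyOf A M Y ∧ IsNthSyzygy n Y X

/-- `X ≅ Σ^n M`. -/
def IsNthCosyzygy : ℕ → ModuleCat.{0} A → ModuleCat.{0} A → Prop
  | 0, M, X => Nonempty (X ≅ M)
  | n + 1, M, X => ∃ Y, IsCosyzygyOf A M Y ∧ IsNthCosyzygy n Y X

/-- `X` is a direct summand of `Y`. -/
def IsDirectSummandOf (X Y : ModuleCat.{0} A) : Prop :=
  ∃ (i : X ⟶ Y) (r : Y ⟶ X), i ≫ r = 𝟙 X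

/-- `X ∈ add W` : `X` is a direct summand of a finite direct sum of copies of `W`. -/
def InAdd (X W : ModuleCat.{0} A) : Prop :=
  ∃ n : ℕ, IsDirectSummandOf A X (ModuleCat.of A (Fin n → ↥W))

/-- The delooping level of `M` is at most `d` :
`Ω^d M ∈ add (A ⊕ Ω^{d+1} M')` for some finitely generated `M'`. -/
def DelLE (d : ℕ) (M : ModuleCat.{0} A) : Prop :=
  ∃ X, IsNthSyzygy A d M X ∧
    ∃ M' : ModuleCat.{0} A, Module.Finite A ↥M' ∧
      ∃ X', IsNthSyzygy A (d + 1) M' X' ∧ InAdd A X (ModuleCat.of A (A × ↥X'))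

/-- The delooping level `del M ∈ ℕ∞`. -/
def delLevel (M : ModuleCat.{0} A) : ℕ∞ :=
  sInf {d : ℕ∞ | ∃ n : ℕ, d = n ∧ DelLE A n M}

/-- The delooping level of the algebra: the supremum of `del S` over the simple modules. -/
def delAlg : ℕ∞ :=
  sSup {d : ℕ∞ | ∃ S : ModuleCat.{0} A, IsSimpleModule A ↥S ∧ delLevel A S = d}

/-- `Q` is a minimal injective cogenerator: the injective envelope of the direct sum of
a complete set of representatives of the simple modules. -/
def IsMinimalInjectiveCogenerator (Q : ModuleCat.{0} A) : Prop :=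
  ∃ (ι : Type) (_ : Fintype ι) (S : ι → ModuleCat.{0} A),
    (∀ i, IsSimpleModule A ↥(S i)) ∧
    (∀ T : ModuleCat.{0} A, IsSimpleModule A ↥T → ∃! i, Nonempty (↥T ≃ₗ[A] ↥(S i))) ∧
    IsInjEnvOf A (ModuleCat.of A (∀ i, ↥(S i))) Q

/-- The desuspending level of `M` is at most `d` :
`Σ^d M ∈ add (D(A) ⊕ Σ^{d+1} M')` for some finitely generated `M'`. -/
def DesLE (d : ℕ) (M : ModuleCat.{0} A) : Prop :=
  ∃ X, IsNthCosyzygy A d M X ∧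
    ∃ Q, IsMinimalInjectiveCogenerator A Q ∧
      ∃ M' : ModuleCat.{0} A, Module.Finite A ↥M' ∧
        ∃ X', IsNthCosyzygy A (d + 1) M' X' ∧ InAdd A X (ModuleCat.of A (↥Q × ↥X'))

/-- The desuspending level `des M ∈ ℕ∞`. -/
def desLevel (M : ModuleCat.{0} A) : ℕ∞ :=
  sInf {d : ℕ∞ | ∃ n : ℕ, d = n ∧ DesLE A n M}

/-- The desuspending level of the algebra. -/
def desAlg : ℕ∞ :=
  sSup {d : ℕ∞ | ∃ S : ModuleCat.{0} A, IsSimpleModule A ↥S ∧ desLevel A S = d}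

/-- The (small) finitistic projective dimension `fin-pro A`. -/
def finProDim : ℕ∞ :=
  sSup {d : ℕ∞ | ∃ M : ModuleCat.{0} A, Module.Finite A ↥M ∧ projDim A M = d ∧ d ≠ ⊤}

/-- The (small) finitistic injective dimension `fin-inj A`. -/
def finInjDim : ℕ∞ :=
  sSup {d : ℕ∞ | ∃ M : ModuleCat.{0} A, Module.Finite A ↥M ∧ injDim A M = d ∧ d ≠ ⊤}

/-- The big finitistic projective dimension `Fin-pro A`. -/
def bigFinProDim : ℕ∞ :=
  sSup {d : ℕ∞ | ∃ M : ModuleCat.{0} A, projDim A M = d ∧ d ≠ ⊤}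

/-- The big finitistic injective dimension `Fin-inj A`. -/
def bigFinInjDim : ℕ∞ :=
  sSup {d : ℕ∞ | ∃ M : ModuleCat.{0} A, injDim A M = d ∧ d ≠ ⊤}

/-- `M` is an indecomposable nonzero module. -/
def Indec (M : ModuleCat.{0} A) : Prop :=
  Nontrivial ↥M ∧ ∀ (N₁ N₂ : Submodule A ↥M), IsCompl N₁ N₂ → N₁ = ⊥ ∨ N₂ = ⊥

/-- `M` is serial (uniserial): its submodules form a chain. -/
def IsUniserial (M : ModuleCat.{0} A) : Prop :=
  ∀ N₁ N₂ : Submodule A ↥M, N₁ ≤ N₂ ∨ N₂ ≤ N₁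

/-- `A` is a Nakayama algebra: all finitely generated indecomposable modules are serial. -/
def IsNakayama : Prop :=
  ∀ M : ModuleCat.{0} A, Module.Finite A ↥M → Indec A M → IsUniserial A M

/-- `A` is connected: it is not a nontrivial product of algebras. -/
def IsConnectedAlgebra : Prop :=
  Nontrivial A ∧ ∀ e : A, IsIdempotentElem e → e ∈ Set.center A → e = 0 ∨ e = 1

/-- `A` is a cyclic Nakayama algebra: connected Nakayama with no simple projective module. -/
def IsCyclicNakayama : Prop :=
  IsNakayama A ∧ IsConnectedAlgebra A ∧
    ¬ ∃ S : ModuleCat.{0} A, IsSimpleModule A ↥S ∧ Projective S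

/-- `T ≅ top M` (and `top M` is simple): there is an essential epimorphism `M ⟶ T`. -/
def IsSimpleTopOf (M T : ModuleCat.{0} A) : Prop :=
  IsSimpleModule A ↥T ∧
    ∃ f : M ⟶ T, Epi f ∧ ∀ (N : ModuleCat.{0} A) (g : N ⟶ M), Epi (g ≫ f) → Epi g

/-- `S ≅ soc M` (and `soc M` is simple): there is an essential monomorphism `S ⟶ M`. -/
def IsSimpleSocOf (M S : ModuleCat.{0} A) : Prop :=
  IsSimpleModule A ↥S ∧
    ∃ f : S ⟶ M, Mono f ∧ ∀ (N : ModuleCat.{0} A) (g : M ⟶ N), Mono (f ≫ g) → Mono g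

/-- `0 ⟶ N ⟶ E ⟶ M ⟶ 0` is an almost split (Auslander-Reiten) sequence. -/
def IsAlmostSplitSeq {N E M : ModuleCat.{0} A} (f : N ⟶ E) (g : E ⟶ M) : Prop :=
  Mono f ∧ Epi g ∧ (∃ w : f ≫ g = 0, (ShortComplex.mk f g w).Exact) ∧
  (¬ ∃ s : M ⟶ E, s ≫ g = 𝟙 M) ∧ Indec A N ∧ Indec A M ∧
  ∀ (X : ModuleCat.{0} A) (h : X ⟶ M), (¬ ∃ s : M ⟶ X, s ≫ h = 𝟙 M) → ∃ h' : X ⟶ E, h' ≫ g = h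

/-- `N ≅ τ M`, the Auslander-Reiten translate of `M` : there is an almost split sequence
`0 ⟶ N ⟶ E ⟶ M ⟶ 0`. -/
def IsTauOf (N M : ModuleCat.{0} A) : Prop :=
  ∃ (E : ModuleCat.{0} A) (f : N ⟶ E) (g : E ⟶ M), IsAlmostSplitSeq A f g

/-- `U ≅ ψ S = τ⁻ top (I S)`. -/
def IsPsiOf (S U : ModuleCat.{0} A) : Prop :=
  ∃ I, IsInjEnvOf A S I ∧ ∃ T, IsSimpleTopOf A I T ∧ IsTauOf A T U

/-- `T ≅ γ S = τ soc (P S)`. -/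
def IsGammaOf (S T : ModuleCat.{0} A) : Prop :=
  ∃ P, IsProjCoverOf A S P ∧ ∃ U, IsSimpleSocOf A P U ∧ IsTauOf A T U

/-- `T ≅ φ S = top (I S)`. -/
def IsPhiOf (S T : ModuleCat.{0} A) : Prop :=
  ∃ I, IsInjEnvOf A S I ∧ IsSimpleTopOf A I T

/-- There is a `ψ`-path `(S_1, …, S_m)` of cardinality `m` ending in `S`. -/
def PsiPathTo (m : ℕ) (S : ModuleCat.{0} A) : Prop :=
  1 ≤ m ∧ ∃ c : ℕ → ModuleCat.{0} A,
    (∀ i < m, IsSimpleModule A ↥(c i)) ∧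
    (∀ i, i + 1 < m → IsPsiOf A (c i) (c (i + 1))) ∧
    Nonempty (c (m - 1) ≅ S)

/-- `a(S)`: the supremum of the cardinalities of `ψ`-paths ending in `S`. -/
def aVal (S : ModuleCat.{0} A) : ℕ∞ :=
  sSup {d : ℕ∞ | ∃ m : ℕ, d = m ∧ PsiPathTo A m S}

/-- `a(A)`: the maximum of `a(S)` over the simple modules which are not `ψ`-cyclic. -/
def aAlg : ℕ∞ :=
  sSup {d : ℕ∞ | ∃ S : ModuleCat.{0} A, IsSimpleModule A ↥S ∧ aVal A S ≠ ⊤ ∧ aVal A S = d}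

/-- `S` is a composition factor of `M`: a simple subquotient of `M`. -/
def IsCompFactorOf (S M : ModuleCat.{0} A) : Prop :=
  IsSimpleModule A ↥S ∧ ∃ N' N : Submodule A ↥M, N' ≤ N ∧
    Nonempty ((↥N ⧸ N'.comap N.subtype) ≃ₗ[A] ↥S)

/-- `e(S) = min {pd S, pd (I S)} = x`. -/
def ERelVal (S : ModuleCat.{0} A) (x : ℕ∞) : Prop :=
  ∃ I, IsInjEnvOf A S I ∧ x = min (projDim A S) (projDim A I)

/-- `e*(S) = min {id S, id (P S)} = x`. -/
def EStarVal (S : ModuleCat.{0} A) (x : ℕ∞) : Prop :=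
  ∃ P, IsProjCoverOf A S P ∧ x = min (injDim A S) (injDim A P)

/-- `T = h(S) = top (Ω^{e(S)} N S)`, the homological permutation. -/
def HRel (S T : ModuleCat.{0} A) : Prop :=
  IsSimpleModule A ↥S ∧ IsSimpleModule A ↥T ∧
  ∃ z : ℕ, ERelVal A S z ∧
    ∃ N, ((Odd z ∧ N = S) ∨ (Even z ∧ IsInjEnvOf A S N)) ∧
      ∃ X, IsNthSyzygy A z N X ∧ IsSimpleTopOf A X T

/-- `S = h*(T) = soc (Σ^{e*(T)} N* T)`, the inverse homological permutation. -/
def HStarRel (T S : ModuleCat.{0} A) : Prop :=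
  IsSimpleModule A ↥T ∧ IsSimpleModule A ↥S ∧
  ∃ z : ℕ, EStarVal A T z ∧
    ∃ N, ((Odd z ∧ N = T) ∨ (Even z ∧ IsProjCoverOf A T N)) ∧
      ∃ X, IsNthCosyzygy A z N X ∧ IsSimpleSocOf A X S

/-- The `t`-fold relational iterate of a relation on modules (up to isomorphism). -/
def IterRel (r : ModuleCat.{0} A → ModuleCat.{0} A → Prop) :
    ℕ → ModuleCat.{0} A → ModuleCat.{0} A → Prop
  | 0, X, Y => Nonempty (X ≅ Y)
  | n + 1, X, Y => ∃ Z, r X Z ∧ IterRel r n Z Y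

end ArtinAlg

/-!
The simple modules over a cyclic Nakayama algebra form a periodic sequence `s i`, indexed by `ℤ` and
following the arrows of the quiver. A finitely generated uniserial module with top `s i` is an
interval `[i, j)` listing its composition factors, and it is projective exactly when `j = f i`,
where the endpoint map `f` is monotone, commutes with the period and satisfies `i < f i`.
The syzygy of `[i, j)` is `[j, f i)`, so `pd [i, j)` is read off from the first coincidence of
consecutive terms in the sequence `i, j, f i, f j, f² i, …`. On the other hand, `ψ (s x) = s i`
means `f i ≤ x < f (i + 1)`, so a `ψ`-path of cardinality `m + 1` ends in `s i` exactly when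
`f^m i < f^m (i + 1)`, and `a (s i)` is the least `k` with `f^k i = f^k (i + 1)`. If such a `k`
exists, no `f^l (i + 1)` equals `f^(l + 1) i`, because `f` has no fixed point; this gives
`pd (s i) = 2 k - 1`. Otherwise only coincidences of that second kind occur, at even places.

Suppose that `a (s i)` is infinite. The injective envelope of `s i` is the interval `[j, i + 1)`
with `f (j - 1) ≤ i < f j`. Let `i + 1 ≤ z < f j`. By periodicity the ranges of the iterates of `f`
stabilize, so `f^N z = f^(N + 1) t` for some large `N` and some `t`. If `f^N z < f^N (z + 1)`, then
`f^(N + 1) (j - 1) ≤ f^N i < f^(N + 1) t < f^(N + 1) j` forces `j - 1 < t < j`, which is absurd.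
So every step from `i + 1` to `f j` collapses under some `f^k` with `k ≤ a(A)`. Hence
`f^k (i + 1) = f^(k + 1) j`, that is, `pd [j, i + 1) ≤ 2 k`.
-/

namespace ArtinAlg

/-- The composition length of a module as a natural number, for use with linear arithmetic;
it is the junk value `0` when the length is infinite. -/
def natLength (R M : Type*) [Ring R] [AddCommGroup M] [Module R M] : ℕ :=
  (Module.length R M).toNat

section Length

variable {R M N : Type*} [Ring R] [AddCommGroup M] [Module R M] [AddCommGroup N] [Module R N]

lemma natLength_congr (e : M ≃ₗ[R] N) : natLength R M = natLength R N := by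
  rw [natLength, natLength, e.length_eq]

lemma natLength_bot : natLength R (⊥ : Submodule R M) = 0 := by
  rw [natLength, Module.length_bot, ENat.toNat_zero]

lemma natLength_top : natLength R (⊤ : Submodule R M) = natLength R M :=
  natLength_congr Submodule.topEquiv

lemma natLength_of_isSimpleModule [IsSimpleModule R M] : natLength R M = 1 := by
  rw [natLength, Module.length_eq_one, ENat.toNat_one]

lemma natLength_range_of_injective {f : N →ₗ[R] M} (hf : Function.Injective f) :
    natLength R (LinearMap.range f) = natLength R N :=
  (natLength_congr (LinearEquiv.ofInjective f hf)).symm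

variable [IsArtinian R M] [IsNoetherian R M]

variable (R M) in
lemma natCast_natLength : (natLength R M : ℕ∞) = Module.length R M :=
  ENat.natCast_toNat Module.length_ne_top

lemma natLength_eq_zero_iff : natLength R M = 0 ↔ Subsingleton M := by
  rw [← Module.length_eq_zero_iff (R := R), ← natCast_natLength, Nat.cast_eq_zero]

lemma natLength_pos_iff : 0 < natLength R M ↔ Nontrivial M := by
  rw [Nat.pos_iff_ne_zero, Ne, natLength_eq_zero_iff, not_subsingleton_iff_nontrivial]

lemma natLength_eq_one_iff : natLength R M = 1 ↔ IsSimpleModule R M := by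
  rw [← Module.length_eq_one_iff, ← natCast_natLength, Nat.cast_eq_one]

lemma natLength_add_natLength_quotient (K : Submodule R M) :
    natLength R K + natLength R (M ⧸ K) = natLength R M := by
  have h := Module.length_eq_add_of_exact K.subtype K.mkQ K.injective_subtype K.mkQ_surjective
    (LinearMap.exact_subtype_mkQ K)
  simp only [← natCast_natLength] at h
  exact_mod_cast h.symm

lemma natLength_ker_add_natLength_range (f : M →ₗ[R] N) :
    natLength R (LinearMap.ker f) + natLength R (LinearMap.range f) = natLength R M := by
  rw [← natLength_add_natLength_quotient (LinearMap.ker f), natLength_congr f.quotKerEquivRange]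

lemma natLength_ker_add_of_surjective {f : M →ₗ[R] N} (hf : Function.Surjective f) :
    natLength R (LinearMap.ker f) + natLength R N = natLength R M := by
  rw [← natLength_ker_add_natLength_range f, LinearMap.range_eq_top.2 hf, natLength_top]

lemma natLength_ker_add_one [IsSimpleModule R N] {f : M →ₗ[R] N} (hf : f ≠ 0) :
    natLength R (LinearMap.ker f) + 1 = natLength R M := by
  rw [← natLength_ker_add_of_surjective (LinearMap.surjective_of_ne_zero hf),
    natLength_of_isSimpleModule (M := N)]

lemma natLength_le_of_surjective {f : M →ₗ[R] N} (hf : Function.Surjective f) :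
    natLength R N ≤ natLength R M := by
  have := natLength_ker_add_of_surjective hf
  omega

lemma natLength_le_of_injective {f : N →ₗ[R] M} (hf : Function.Injective f) :
    natLength R N ≤ natLength R M := by
  have := natLength_add_natLength_quotient (LinearMap.range f)
  have := natLength_range_of_injective hf
  omega

lemma eq_of_le_of_natLength_le {K L : Submodule R M} (hKL : K ≤ L)
    (h : natLength R L ≤ natLength R K) : K = L := by
  have h_equiv := natLength_congr (Submodule.comapSubtypeEquivOfLe hKL)
  have h_add := natLength_add_natLength_quotient (K.comap L.subtype)
  have : Subsingleton (L ⧸ K.comap L.subtype) := (natLength_eq_zero_iff (R := R)).1 (by omega)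
  exact hKL.antisymm (Submodule.comap_subtype_eq_top.1 (Submodule.Quotient.subsingleton_iff.1 this))

lemma natLength_lt {K : Submodule R M} (hK : K ≠ ⊤) : natLength R K < natLength R M := by
  by_contra! h
  exact hK (eq_of_le_of_natLength_le le_top (natLength_top.trans_le h))

lemma surjective_of_injective_of_natLength_le {f : N →ₗ[R] M} (hf : Function.Injective f)
    (h : natLength R M ≤ natLength R N) : Function.Surjective f := by
  by_contra hs
  have h_lt := natLength_lt (mt LinearMap.range_eq_top.1 hs)
  rw [natLength_range_of_injective hf] at h_lt
  omega

lemma exists_submodule_natLength_eq {k : ℕ} (hk : k ≤ natLength R M) :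
    ∃ K : Submodule R M, natLength R K = k := by
  suffices ∀ K : Submodule R M, k ≤ natLength R K → ∃ L : Submodule R M, natLength R L = k from
    this ⊤ (by rwa [natLength_top])
  intro K
  induction K using WellFoundedLT.induction with
  | ind K ih =>
    intro hk
    obtain rfl | hlt := hk.eq_or_lt
    · exact ⟨K, rfl⟩
    have : Nontrivial K := (natLength_pos_iff (R := R)).1 (by omega)
    obtain ⟨L, hL⟩ := IsCoatomic.exists_coatom (Submodule R K)
    have : IsSimpleModule R (K ⧸ L) := isSimpleModule_iff_isCoatom.2 hL
    have h_add := natLength_add_natLength_quotient L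
    have h_one := natLength_of_isSimpleModule (R := R) (M := K ⧸ L)
    have h_map := natLength_congr (Submodule.equivMapOfInjective _ K.injective_subtype L)
    have hne : L.map K.subtype ≠ K := fun h => by
      rw [h] at h_map
      omega
    exact ih _ ((Submodule.map_subtype_le K L).lt_of_ne hne) (by omega)

end Length

section Uniserial

/-- A uniserial (serial) module: its submodules form a chain. This is the unbundled,
universe-polymorphic form of `IsUniserial`. -/
class IsUniserialModule (R M : Type*) [Ring R] [AddCommGroup M] [Module R M] : Prop where
  le_total (K L : Submodule R M) : K ≤ L ∨ L ≤ K

variable {R M N U V : Type*} [Ring R] [AddCommGroup M] [Module R M] [AddCommGroup N] [Module R N]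
  [AddCommGroup U] [Module R U] [AddCommGroup V] [Module R V]

namespace IsUniserialModule

lemma of_injective [IsUniserialModule R M] {f : N →ₗ[R] M} (hf : Function.Injective f) :
    IsUniserialModule R N where
  le_total K L := by
    simpa only [Submodule.map_le_map_iff_of_injective hf] using le_total (K.map f) (L.map f)

lemma of_surjective [IsUniserialModule R M] {f : M →ₗ[R] N} (hf : Function.Surjective f) :
    IsUniserialModule R N where
  le_total K L := by
    simpa only [Submodule.comap_le_comap_iff_of_surjective hf] using
      le_total (K.comap f) (L.comap f)

instance [IsUniserialModule R M] (K : Submodule R M) : IsUniserialModule R K :=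
  of_injective K.injective_subtype

instance [IsUniserialModule R M] (K : Submodule R M) : IsUniserialModule R (M ⧸ K) :=
  of_surjective K.mkQ_surjective

instance [IsSimpleModule R M] : IsUniserialModule R M where
  le_total K L := by
    obtain rfl | rfl := eq_bot_or_eq_top K
    · exact Or.inl bot_le
    · exact Or.inr le_top

variable [IsUniserialModule R M] [IsArtinian R M] [IsNoetherian R M]

lemma le_of_natLength_le {K L : Submodule R M} (h : natLength R K ≤ natLength R L) : K ≤ L :=
  (le_total K L).elim id fun hLK => (eq_of_le_of_natLength_le hLK h).ge

lemma eq_of_natLength_eq {K L : Submodule R M} (h : natLength R K = natLength R L) : K = L :=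
  (le_of_natLength_le h.le).antisymm (le_of_natLength_le h.ge)

lemma range_le_of_ne_bot [IsSimpleModule R U] (f : U →ₗ[R] M) {K : Submodule R M} (hK : K ≠ ⊥) :
    LinearMap.range f ≤ K := by
  obtain rfl | hf := eq_or_ne f 0
  · rw [LinearMap.range_zero]
    exact bot_le
  apply le_of_natLength_le
  rw [natLength_range_of_injective (LinearMap.injective_of_ne_zero hf), natLength_of_isSimpleModule]
  exact natLength_pos_iff.2 (Submodule.nontrivial_iff_ne_bot.2 hK)

lemma le_ker_of_ne_top [IsSimpleModule R U] (f : M →ₗ[R] U) {K : Submodule R M} (hK : K ≠ ⊤) :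
    K ≤ LinearMap.ker f := by
  obtain rfl | hf := eq_or_ne f 0
  · rw [LinearMap.ker_zero]
    exact le_top
  apply le_of_natLength_le
  have := natLength_ker_add_one hf
  have := natLength_lt hK
  omega

lemma injective_of_comp_ne_zero [IsSimpleModule R U] {f : U →ₗ[R] M} {g : M →ₗ[R] N}
    (h : g ∘ₗ f ≠ 0) : Function.Injective g := by
  rw [← LinearMap.ker_eq_bot]
  by_contra h_ker
  exact h (LinearMap.range_le_ker_iff.1 (range_le_of_ne_bot f h_ker))

lemma surjective_of_comp_ne_zero [IsSimpleModule R U] {g : M →ₗ[R] U} {f : N →ₗ[R] M}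
    (h : g ∘ₗ f ≠ 0) : Function.Surjective f := by
  rw [← LinearMap.range_eq_top]
  by_contra h_range
  exact h (LinearMap.range_le_ker_iff.1 (le_ker_of_ne_top g h_range))

variable [IsSimpleModule R U] [IsSimpleModule R V]

lemma nonempty_linearEquiv_of_quotient {f : M →ₗ[R] U} (hf : f ≠ 0) {g : M →ₗ[R] V} (hg : g ≠ 0) :
    Nonempty (U ≃ₗ[R] V) := by
  have h_ker : LinearMap.ker f = LinearMap.ker g := by
    apply eq_of_natLength_eq
    have := natLength_ker_add_one hf
    have := natLength_ker_add_one hg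
    omega
  exact ⟨(f.quotKerEquivOfSurjective (LinearMap.surjective_of_ne_zero hf)).symm ≪≫ₗ
    Submodule.quotEquivOfEq _ _ h_ker ≪≫ₗ
    g.quotKerEquivOfSurjective (LinearMap.surjective_of_ne_zero hg)⟩

lemma nonempty_linearEquiv_of_submodule {f : U →ₗ[R] M} (hf : f ≠ 0) {g : V →ₗ[R] M} (hg : g ≠ 0) :
    Nonempty (U ≃ₗ[R] V) := by
  have hf := LinearMap.injective_of_ne_zero hf
  have hg := LinearMap.injective_of_ne_zero hg
  have h_range : LinearMap.range f = LinearMap.range g := by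
    apply eq_of_natLength_eq
    rw [natLength_range_of_injective hf, natLength_range_of_injective hg,
      natLength_of_isSimpleModule, natLength_of_isSimpleModule]
  exact ⟨LinearEquiv.ofInjective f hf ≪≫ₗ LinearEquiv.ofEq _ _ h_range ≪≫ₗ
    (LinearEquiv.ofInjective g hg).symm⟩

end IsUniserialModule

lemma mkQ_ne_zero (K : Submodule R M) [Nontrivial (M ⧸ K)] : K.mkQ ≠ 0 := by
  rw [Ne, ← LinearMap.ker_eq_top, Submodule.ker_mkQ]
  exact Submodule.Quotient.nontrivial_iff.1 ‹_›

lemma exists_isSimpleModule_quotient (R M : Type*) [Ring R] [AddCommGroup M] [Module R M]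
    [Module.Finite R M] [Nontrivial M] : ∃ K : Submodule R M, IsSimpleModule R (M ⧸ K) :=
  (IsCoatomic.exists_coatom (Submodule R M)).imp fun _ => isSimpleModule_iff_isCoatom.2

lemma exists_toSpanSingleton_comp_ne_zero {f : M →ₗ[R] N} (hf : f ≠ 0) :
    ∃ m, f ∘ₗ LinearMap.toSpanSingleton R M m ≠ 0 := by
  contrapose! hf
  ext m
  simpa using LinearMap.congr_fun (hf m) 1

lemma IsUniserialModule.natLength_le_natLength_ring [IsArtinianRing R] [Module.Finite R M]
    [IsUniserialModule R M] : natLength R M ≤ natLength R R := by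
  rcases subsingleton_or_nontrivial M with hM | hM
  · rw [(natLength_eq_zero_iff (R := R)).2 hM]
    exact Nat.zero_le _
  obtain ⟨K, hK⟩ := exists_isSimpleModule_quotient R M
  have := IsSimpleModule.nontrivial R (M ⧸ K)
  obtain ⟨m, hm⟩ := exists_toSpanSingleton_comp_ne_zero (mkQ_ne_zero K)
  exact natLength_le_of_surjective (surjective_of_comp_ne_zero hm)

end Uniserial

section LinearMap

variable {R M N P : Type*} [Ring R] [AddCommGroup M] [Module R M] [AddCommGroup N] [Module R N]
  [AddCommGroup P] [Module R P]

lemma comp_ne_zero_of_injective {g : N →ₗ[R] P} (hg : Function.Injective g) {f : M →ₗ[R] N}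
    (hf : f ≠ 0) : g ∘ₗ f ≠ 0 :=
  fun h => hf ((LinearMap.cancel_left hg).1 (h.trans g.comp_zero.symm))

lemma comp_ne_zero_of_surjective {f : M →ₗ[R] N} (hf : Function.Surjective f) {g : N →ₗ[R] P}
    (hg : g ≠ 0) : g ∘ₗ f ≠ 0 :=
  fun h => hg ((LinearMap.cancel_right hf).1 (h.trans f.zero_comp.symm))

lemma exists_comp_eq_of_ker_le {f : M →ₗ[R] N} (hf : Function.Surjective f) {g : M →ₗ[R] P}
    (h : LinearMap.ker f ≤ LinearMap.ker g) : ∃ k : N →ₗ[R] P, k ∘ₗ f = g := by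
  refine ⟨(LinearMap.ker f).liftQ g h ∘ₗ (f.quotKerEquivOfSurjective hf).symm.toLinearMap, ?_⟩
  ext m
  have h_mk : (f.quotKerEquivOfSurjective hf).symm (f m) = Submodule.Quotient.mk m :=
    (LinearEquiv.symm_apply_eq _).2 rfl
  simp [h_mk]

lemma linearEquiv_ne_zero [Nontrivial M] (e : M ≃ₗ[R] N) : (e : M →ₗ[R] N) ≠ 0 := by
  obtain ⟨m, hm⟩ := exists_ne (0 : M)
  exact fun h => hm (e.map_eq_zero_iff.1 (LinearMap.congr_fun h m))

lemma projective_of_isCompl [Module.Projective R M] {K L : Submodule R M} (h : IsCompl K L) :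
    Module.Projective R K :=
  .of_split K.subtype (K.projectionOnto L h) (by ext; simp)

lemma comp_subtype_ne_zero_of_isCompl {K L : Submodule R M} (h : IsCompl K L) {f : M →ₗ[R] N}
    (hf : f ≠ 0) : f ∘ₗ K.subtype ≠ 0 ∨ f ∘ₗ L.subtype ≠ 0 := by
  contrapose! hf
  simp only [← LinearMap.range_le_ker_iff, Submodule.range_subtype] at hf
  exact LinearMap.ker_eq_top.1 (top_le_iff.1 (h.sup_eq_top ▸ sup_le hf.1 hf.2))

end LinearMap

section Essential

/-- An essential monomorphism: `f` is injective and its image meets every nonzero submodule of the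
target. Injective envelopes are the essential monomorphisms into injective modules. -/
structure IsEssentialMono {R M N : Type*} [Ring R] [AddCommGroup M] [Module R M] [AddCommGroup N]
    [Module R N] (f : M →ₗ[R] N) : Prop where
  injective : Function.Injective f
  eq_bot_of_comap_eq_bot : ∀ K : Submodule R N, K.comap f = ⊥ → K = ⊥

namespace IsEssentialMono

variable {R M N P : Type*} [Ring R] [AddCommGroup M] [Module R M] [AddCommGroup N] [Module R N]
  [AddCommGroup P] [Module R P]

lemma comp {g : N →ₗ[R] P} (hg : IsEssentialMono g) {f : M →ₗ[R] N} (hf : IsEssentialMono f) :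
    IsEssentialMono (g ∘ₗ f) where
  injective := hg.injective.comp hf.injective
  eq_bot_of_comap_eq_bot K hK :=
    hg.eq_bot_of_comap_eq_bot K (hf.eq_bot_of_comap_eq_bot _ (K.comap_comp f g ▸ hK))

lemma range_le [IsSimpleModule R M] {f : M →ₗ[R] N} (hf : IsEssentialMono f) {K : Submodule R N}
    (hK : K ≠ ⊥) : LinearMap.range f ≤ K := by
  rw [LinearMap.range_eq_map, Submodule.map_le_iff_le_comap]
  exact ((eq_bot_or_eq_top _).resolve_left (mt (hf.eq_bot_of_comap_eq_bot K) hK)).ge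

lemma of_ne_zero [IsSimpleModule R M] [IsUniserialModule R N] [IsArtinian R N] [IsNoetherian R N]
    {f : M →ₗ[R] N} (hf : f ≠ 0) : IsEssentialMono f where
  injective := LinearMap.injective_of_ne_zero hf
  eq_bot_of_comap_eq_bot K hK := by
    by_contra h
    have h_top : K.comap f = ⊤ := by
      rw [← top_le_iff, ← Submodule.map_le_iff_le_comap, ← LinearMap.range_eq_map]
      exact IsUniserialModule.range_le_of_ne_bot f h
    exact bot_ne_top (hK.symm.trans h_top)

end IsEssentialMono

variable {R M N : Type*} [Ring R] [AddCommGroup M] [Module R M] [AddCommGroup N] [Module R N]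

lemma exists_maximal_disjoint (K : Submodule R M) :
    ∃ C : Submodule R M, Maximal (Disjoint K) C := by
  obtain ⟨C, -, hC⟩ := zorn_le_nonempty₀ {C : Submodule R M | Disjoint K C} (fun c hc h_chain _ _ =>
    ⟨sSup c, h_chain.directedOn.disjoint_sSup_right.2 fun _ hz => hc hz, fun _ => le_sSup⟩)
    ⊥ disjoint_bot_right
  exact ⟨C, hC⟩

lemma map_eq_bot_iff_of_injective {f : M →ₗ[R] N} (hf : Function.Injective f) {K : Submodule R M} :
    K.map f = ⊥ ↔ K = ⊥ :=
  (Submodule.map_injective_of_injective hf).eq_iff' (Submodule.map_bot f)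

lemma disjoint_range_iff_comap_eq_bot {f : M →ₗ[R] N} (hf : Function.Injective f)
    {K : Submodule R N} : Disjoint (LinearMap.range f) K ↔ K.comap f = ⊥ := by
  rw [← map_eq_bot_iff_of_injective hf, Submodule.map_comap_eq, disjoint_iff]

lemma exists_isEssentialMono_mkQ_comp {f : M →ₗ[R] N} (hf : Function.Injective f) :
    ∃ C : Submodule R N, IsEssentialMono (C.mkQ ∘ₗ f) := by
  obtain ⟨C, h_disj, h_max⟩ := exists_maximal_disjoint (LinearMap.range f)
  refine ⟨C, ?_, fun K hK => ?_⟩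
  · rwa [← LinearMap.ker_eq_bot, LinearMap.ker_comp, Submodule.ker_mkQ,
      ← disjoint_range_iff_comap_eq_bot hf]
  · rw [Submodule.comap_comp, ← disjoint_range_iff_comap_eq_bot hf] at hK
    rw [← Submodule.map_comap_eq_of_surjective C.mkQ_surjective K, ← le_bot_iff,
      ← Submodule.mkQ_map_self C]
    exact Submodule.map_mono (h_max hK (C.le_comap_mkQ K))

lemma finite_of_forall_natLength_le [IsArtinianRing R] {b : ℕ}
    (h : ∀ K : Submodule R M, K.FG → natLength R K ≤ b) : Module.Finite R M := by
  obtain ⟨_, ⟨K, hK, rfl⟩, h_max⟩ := BddAbove.exists_isGreatest_of_nonempty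
    (S := {n | ∃ K : Submodule R M, K.FG ∧ natLength R K = n})
    ⟨b, by rintro _ ⟨K, hK, rfl⟩; exact h K hK⟩ ⟨_, ⊥, Submodule.fg_bot, rfl⟩
  suffices K = ⊤ from ⟨this ▸ hK⟩
  refine Submodule.eq_top_iff'.2 fun x => ?_
  set L := K ⊔ Submodule.span R {x}
  have hL : L.FG := hK.sup (Submodule.fg_span_singleton x)
  have : Module.Finite R L := Module.Finite.iff_fg.2 hL
  obtain ⟨⟨y, hyK⟩, hy⟩ := surjective_of_injective_of_natLength_le
    (Submodule.inclusion_injective (le_sup_left : K ≤ L)) (h_max ⟨L, hL, rfl⟩)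
    ⟨x, Submodule.mem_sup_right (Submodule.mem_span_singleton_self x)⟩
  obtain rfl : y = x := congrArg Subtype.val hy
  exact hyK

end Essential

section Nakayama

variable {A : Type} [Ring A]

lemma IsNakayama.isUniserialModule (hN : IsNakayama A) {M : Type} [AddCommGroup M] [Module A M]
    [Module.Finite A M] (h : ∀ K L : Submodule A M, IsCompl K L → K = ⊥ ∨ L = ⊥) :
    IsUniserialModule A M := by
  rcases subsingleton_or_nontrivial M with hM | hM
  · exact ⟨fun K L => Or.inl (Subsingleton.elim K L).le⟩
  · exact ⟨hN (ModuleCat.of A M) ‹_› ⟨hM, h⟩⟩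

lemma IsNakayama.isUniserialModule_of_isEssentialMono (hN : IsNakayama A) {T X : Type}
    [AddCommGroup T] [Module A T] [IsSimpleModule A T] [AddCommGroup X] [Module A X]
    {f : T →ₗ[A] X} (hf : IsEssentialMono f) (K : Submodule A X) [Module.Finite A K] :
    IsUniserialModule A K := by
  refine hN.isUniserialModule fun N₁ N₂ h => ?_
  have := IsSimpleModule.nontrivial A T
  by_contra! h_ne
  have h_map {N : Submodule A K} (hne : N ≠ ⊥) : LinearMap.range f ≤ N.map K.subtype :=
    hf.range_le (mt (map_eq_bot_iff_of_injective K.injective_subtype).1 hne)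
  have h_le := le_inf (h_map h_ne.1) (h_map h_ne.2)
  rw [← Submodule.map_inf _ K.injective_subtype, h.inf_eq_bot, Submodule.map_bot, le_bot_iff,
    LinearMap.range_eq_bot] at h_le
  obtain ⟨t, ht⟩ := exists_ne (0 : T)
  exact ht (hf.injective (by rw [h_le]; rfl))

lemma injective_of_retract {M Q : Type} [AddCommGroup M] [Module A M] [AddCommGroup Q] [Module A Q]
    [Module.Injective A Q] (i : M →ₗ[A] Q) (r : Q →ₗ[A] M) (h : r ∘ₗ i = LinearMap.id) :
    Module.Injective A M where
  out X Y _ _ _ _ f hf g := by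
    obtain ⟨k, hk⟩ := Module.Injective.out f hf (i ∘ₗ g)
    exact ⟨r ∘ₗ k, fun x => by simpa [hk] using LinearMap.congr_fun h (g x)⟩

lemma exists_injective_linearMap (M : Type) [AddCommGroup M] [Module A M] :
    ∃ Q : ModuleCat.{0} A, Module.Injective A Q ∧ ∃ f : M →ₗ[A] Q, Function.Injective f :=
  ⟨Injective.under (ModuleCat.of A M),
    Module.injective_module_of_injective_object A _ (inj := Injective.injective_under _),
    (Injective.ι (ModuleCat.of A M)).hom, (ModuleCat.mono_iff_injective _).1 inferInstance⟩

variable [IsArtinianRing A]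

lemma IsNakayama.finite_of_isEssentialMono (hN : IsNakayama A) {T X : Type} [AddCommGroup T]
    [Module A T] [IsSimpleModule A T] [AddCommGroup X] [Module A X] {f : T →ₗ[A] X}
    (hf : IsEssentialMono f) : Module.Finite A X ∧ IsUniserialModule A X := by
  have h_fin : Module.Finite A X := finite_of_forall_natLength_le fun K hK => by
    have : Module.Finite A K := Module.Finite.iff_fg.2 hK
    have := hN.isUniserialModule_of_isEssentialMono hf K
    exact IsUniserialModule.natLength_le_natLength_ring
  have := hN.isUniserialModule_of_isEssentialMono hf ⊤
  exact ⟨h_fin, .of_surjective (Submodule.topEquiv (R := A) (M := X)).surjective⟩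

lemma IsNakayama.injective_of_maximal (hN : IsNakayama A) {M : Type} [AddCommGroup M] [Module A M]
    [Module.Finite A M] [IsUniserialModule A M] [Nontrivial M]
    (h_max : ∀ X : ModuleCat.{0} A, Module.Finite A X → IsUniserialModule A X →
      (∃ j : M →ₗ[A] X, Function.Injective j) → natLength A X ≤ natLength A M) :
    Module.Injective A M := by
  obtain ⟨Q, hQ, i, hi⟩ := exists_injective_linearMap (A := A) M
  obtain ⟨C, hC⟩ := exists_isEssentialMono_mkQ_comp hi
  obtain ⟨T, hT⟩ := exists_submodule_natLength_eq (natLength_pos_iff (R := A).2 ‹Nontrivial M›)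
  have : IsSimpleModule A T := natLength_eq_one_iff.1 hT
  have := IsSimpleModule.nontrivial A T
  have h_T : IsEssentialMono T.subtype :=
    .of_ne_zero (comp_ne_zero_of_injective T.injective_subtype
      (linearEquiv_ne_zero (LinearEquiv.refl A T)))
  obtain ⟨h_fin, h_uni⟩ := hN.finite_of_isEssentialMono (hC.comp h_T)
  have h_surj := surjective_of_injective_of_natLength_le hC.injective
    (h_max (ModuleCat.of A (Q ⧸ C)) h_fin h_uni ⟨_, hC.injective⟩)
  let e := LinearEquiv.ofBijective (C.mkQ ∘ₗ i) ⟨hC.injective, h_surj⟩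
  exact injective_of_retract i (e.symm.toLinearMap ∘ₗ C.mkQ)
    (LinearMap.ext fun x => e.symm_apply_apply x)

lemma IsNakayama.exists_injective_hull (hN : IsNakayama A) (T : Type) [AddCommGroup T] [Module A T]
    [IsSimpleModule A T] : ∃ I : ModuleCat.{0} A, Module.Finite A I ∧ IsUniserialModule A I ∧
      Module.Injective A I ∧ ∃ f : T →ₗ[A] I, f ≠ 0 := by
  have := IsSimpleModule.nontrivial A T
  obtain ⟨_, ⟨M, hM_fin, hM_uni, f, hf, rfl⟩, h_max⟩ := BddAbove.exists_isGreatest_of_nonempty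
    (S := {n | ∃ M : ModuleCat.{0} A, Module.Finite A M ∧ IsUniserialModule A M ∧
      ∃ f : T →ₗ[A] M, f ≠ 0 ∧ natLength A M = n})
    ⟨natLength A A, by
      rintro _ ⟨M, _, _, -, -, rfl⟩
      exact IsUniserialModule.natLength_le_natLength_ring⟩
    ⟨_, ModuleCat.of A T, inferInstanceAs (Module.Finite A T),
      inferInstanceAs (IsUniserialModule A T), _, linearEquiv_ne_zero (LinearEquiv.refl A T), rfl⟩
  have : Nontrivial M := (LinearMap.injective_of_ne_zero hf).nontrivial
  refine ⟨M, hM_fin, hM_uni, hN.injective_of_maximal fun X hX_fin hX_uni ⟨j, hj⟩ => ?_, f, hf⟩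
  exact h_max ⟨X, hX_fin, hX_uni, j ∘ₗ f, comp_ne_zero_of_injective hj hf, rfl⟩

lemma IsNakayama.exists_projective_cover (hN : IsNakayama A) (U : Type) [AddCommGroup U]
    [Module A U] [IsSimpleModule A U] :
    ∃ P : ModuleCat.{0} A, Module.Finite A P ∧ IsUniserialModule A P ∧
      Module.Projective A P ∧ ∃ g : P →ₗ[A] U, g ≠ 0 := by
  have := IsSimpleModule.nontrivial A U
  obtain ⟨u, hu⟩ := exists_toSpanSingleton_comp_ne_zero (linearEquiv_ne_zero (LinearEquiv.refl A U))
  obtain ⟨_, ⟨P, hP_fin, hP_proj, g, hg, rfl⟩, h_min⟩ := (OrderBot.bddBelow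
    {n | ∃ P : ModuleCat.{0} A, Module.Finite A P ∧ Module.Projective A P ∧
      ∃ g : P →ₗ[A] U, g ≠ 0 ∧ natLength A P = n}).exists_isLeast_of_nonempty
    ⟨_, ModuleCat.of A A, inferInstanceAs (Module.Finite A A),
      inferInstanceAs (Module.Projective A A), _, hu, rfl⟩
  -- A complement of a summand on which `g` is nonzero vanishes, by minimality.
  have h_bot {K L : Submodule A P} (h : IsCompl K L) (hK : g ∘ₗ K.subtype ≠ 0) : L = ⊥ := by
    have h_le := h_min ⟨ModuleCat.of A K, inferInstanceAs (Module.Finite A K),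
      projective_of_isCompl h, _, hK, rfl⟩
    have hK_top : K = ⊤ := eq_of_le_of_natLength_le le_top (natLength_top.trans_le h_le)
    exact eq_bot_of_isCompl_top (hK_top ▸ h).symm
  refine ⟨P, hP_fin, hN.isUniserialModule fun K L h => ?_, hP_proj, g, hg⟩
  exact (comp_subtype_ne_zero_of_isCompl h hg).elim (Or.inr <| h_bot h ·) (Or.inl <| h_bot h.symm ·)

end Nakayama

section Lifting

variable {R : Type*} [Ring R]

lemma exists_surjective_comp_eq {M U P : Type*} [AddCommGroup M] [Module R M] [AddCommGroup U]
    [Module R U] [IsSimpleModule R U] [IsUniserialModule R M] [IsArtinian R M] [IsNoetherian R M]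
    [AddCommGroup P] [Module R P] [Module.Projective R P] {g : P →ₗ[R] U} (hg : g ≠ 0)
    {h : M →ₗ[R] U} (hh : h ≠ 0) : ∃ q : P →ₗ[R] M, Function.Surjective q ∧ h ∘ₗ q = g := by
  obtain ⟨q, hq⟩ := Module.projective_lifting_property h g (LinearMap.surjective_of_ne_zero hh)
  exact ⟨q, IsUniserialModule.surjective_of_comp_ne_zero (hq ▸ hg), hq⟩

lemma exists_injective_comp_eq {M U I : Type} [AddCommGroup M] [Module R M] [AddCommGroup U]
    [Module R U] [IsSimpleModule R U] [IsUniserialModule R M] [IsArtinian R M] [IsNoetherian R M]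
    [AddCommGroup I] [Module R I] [Module.Injective R I] {g : U →ₗ[R] I} (hg : g ≠ 0)
    {h : U →ₗ[R] M} (hh : h ≠ 0) : ∃ q : M →ₗ[R] I, Function.Injective q ∧ q ∘ₗ h = g := by
  obtain ⟨q, hq⟩ := Module.Injective.out h (LinearMap.injective_of_ne_zero hh) g
  have hq : q ∘ₗ h = g := LinearMap.ext hq
  exact ⟨q, IsUniserialModule.injective_of_comp_ne_zero (hq ▸ hg), hq⟩

lemma exists_pullback_of_range_eq_ker {K M N X : Type*} [AddCommGroup K] [Module R K]
    [AddCommGroup M] [Module R M] [AddCommGroup N] [Module R N] [AddCommGroup X] [Module R X]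
    {f : K →ₗ[R] M} {g : M →ₗ[R] N} (h_exact : LinearMap.range f = LinearMap.ker g)
    (hg : Function.Surjective g) (h : X →ₗ[R] N) :
    ∃ (Z : Submodule R (M × X)) (p : Z →ₗ[R] M) (q : Z →ₗ[R] X) (j : K →ₗ[R] Z),
      (∀ z, g (p z) = h (q z)) ∧ (∀ t, p (j t) = f t) ∧ Function.Surjective q ∧
        LinearMap.range j = LinearMap.ker q := by
  have hgf (t : K) : g (f t) = 0 := LinearMap.mem_ker.1 (h_exact ▸ LinearMap.mem_range_self f t)
  let Z := LinearMap.eqLocus (g ∘ₗ LinearMap.fst R M X) (h ∘ₗ LinearMap.snd R M X)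
  let j : K →ₗ[R] Z := (LinearMap.inl R M X ∘ₗ f).codRestrict Z fun t =>
    (hgf t).trans h.map_zero.symm
  refine ⟨Z, LinearMap.fst R M X ∘ₗ Z.subtype, LinearMap.snd R M X ∘ₗ Z.subtype, j,
    fun z => z.2, fun _ => rfl, fun x => ?_, le_antisymm ?_ fun z hz => ?_⟩
  · obtain ⟨m, hm⟩ := hg (h x)
    exact ⟨⟨(m, x), hm⟩, rfl⟩
  · rintro _ ⟨t, rfl⟩
    rfl
  · have hz_snd : z.1.2 = 0 := hz
    obtain ⟨t, ht⟩ : z.1.1 ∈ LinearMap.range f := by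
      have h_square : g z.1.1 = h z.1.2 := z.2
      rw [h_exact, LinearMap.mem_ker, h_square, hz_snd, map_zero]
    exact ⟨t, Subtype.ext (Prod.ext ht hz_snd.symm)⟩

end Lifting

section Arrow

variable {A : Type} [Ring A]

/-- There is an arrow `U ⟶ T` in the quiver of a Nakayama algebra: a uniserial module of length two
with top `U` and socle `T`, for simple `U` and `T`. -/
def IsArrow (A U T : Type) [Ring A] [AddCommGroup U] [Module A U] [AddCommGroup T] [Module A T] :
    Prop :=
  ∃ E : ModuleCat.{0} A, Module.Finite A E ∧ IsUniserialModule A E ∧ natLength A E = 2 ∧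
    (∃ g : E →ₗ[A] U, g ≠ 0) ∧ ∃ f : T →ₗ[A] E, f ≠ 0

lemma IsArrow.congr {T T' U U' : Type} [AddCommGroup T] [Module A T] [AddCommGroup T'] [Module A T']
    [AddCommGroup U] [Module A U] [AddCommGroup U'] [Module A U'] (h : IsArrow A U T)
    (e : U ≃ₗ[A] U') (e' : T ≃ₗ[A] T') : IsArrow A U' T' := by
  obtain ⟨E, hE, h_uni, h_len, ⟨g, hg⟩, f, hf⟩ := h
  exact ⟨E, hE, h_uni, h_len, ⟨e.toLinearMap ∘ₗ g, comp_ne_zero_of_injective e.injective hg⟩,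
    f ∘ₗ e'.symm.toLinearMap, comp_ne_zero_of_surjective e'.symm.surjective hf⟩

variable [IsArtinianRing A] {T U : Type} [AddCommGroup T] [Module A T] [IsSimpleModule A T]
  [AddCommGroup U] [Module A U] [IsSimpleModule A U]

lemma exists_isArrow {P : Type} [AddCommGroup P] [Module A P] [Module.Finite A P]
    [IsUniserialModule A P] (h_len : 2 ≤ natLength A P) {g : P →ₗ[A] U} (hg : g ≠ 0) :
    ∃ T : ModuleCat.{0} A, IsSimpleModule A T ∧ IsArrow A U T := by
  obtain ⟨K, hK⟩ := exists_submodule_natLength_eq (R := A) (Nat.sub_le (natLength A P) 2)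
  have h_quot : natLength A (P ⧸ K) = 2 := by
    have := natLength_add_natLength_quotient K
    omega
  obtain ⟨T, hT⟩ := exists_submodule_natLength_eq (R := A) (one_le_two.trans_eq h_quot.symm)
  have hT : IsSimpleModule A T := natLength_eq_one_iff.1 hT
  have := IsSimpleModule.nontrivial A T
  have hK_top : K ≠ ⊤ := by
    rintro rfl
    rw [natLength_top] at hK
    omega
  have h_le := IsUniserialModule.le_ker_of_ne_top g hK_top
  refine ⟨ModuleCat.of A T, hT, ModuleCat.of A (P ⧸ K), inferInstanceAs (Module.Finite A (P ⧸ K)),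
    inferInstanceAs (IsUniserialModule A (P ⧸ K)), h_quot, ⟨K.liftQ g h_le, fun h => hg ?_⟩,
    T.subtype, comp_ne_zero_of_injective T.injective_subtype
      (linearEquiv_ne_zero (LinearEquiv.refl A T))⟩
  rw [← K.liftQ_mkQ g h_le, h, LinearMap.zero_comp]

lemma isArrow_of_radical {M : Type} [AddCommGroup M] [Module A M] [Module.Finite A M]
    [IsUniserialModule A M] {g : M →ₗ[A] U} (hg : g ≠ 0) {K : Submodule A M}
    (hK : natLength A K + 1 = natLength A M) {h : K →ₗ[A] T} (hh : h ≠ 0) : IsArrow A U T := by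
  let L : Submodule A M := (LinearMap.ker h).map K.subtype
  have hL_len : natLength A L = natLength A (LinearMap.ker h) :=
    (natLength_congr (Submodule.equivMapOfInjective _ K.injective_subtype _)).symm
  have h_ker := natLength_ker_add_one hh
  have h_quot := natLength_add_natLength_quotient L
  have hL_top : L ≠ ⊤ := fun h_top => by
    rw [h_top, natLength_top] at hL_len
    omega
  have hL_comap : LinearMap.ker (L.mkQ ∘ₗ K.subtype) = LinearMap.ker h := by
    rw [LinearMap.ker_comp, Submodule.ker_mkQ, Submodule.comap_map_eq_of_injective
      K.injective_subtype]
  have hL_le := IsUniserialModule.le_ker_of_ne_top g hL_top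
  obtain ⟨f, hf⟩ := exists_comp_eq_of_ker_le (LinearMap.surjective_of_ne_zero hh) hL_comap.ge
  refine ⟨ModuleCat.of A (M ⧸ L), inferInstanceAs (Module.Finite A (M ⧸ L)),
    inferInstanceAs (IsUniserialModule A (M ⧸ L)), show natLength A (M ⧸ L) = 2 by omega,
    ⟨L.liftQ g hL_le, fun h_zero => hg ?_⟩, f, fun h_zero => hh ?_⟩
  · rw [← L.liftQ_mkQ g hL_le, h_zero, LinearMap.zero_comp]
  · rw [← LinearMap.ker_eq_top, ← hL_comap, ← hf, h_zero, LinearMap.zero_comp, LinearMap.ker_zero]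

namespace IsNakayama

section Unique

variable {M N : Type} [AddCommGroup M] [Module A M] [Module.Finite A M] [IsUniserialModule A M]
  [AddCommGroup N] [Module A N] [Module.Finite A N] [IsUniserialModule A N]

lemma exists_linearEquiv_of_socle (hN : IsNakayama A) (h_len : natLength A M = natLength A N)
    {f : T →ₗ[A] M} (hf : f ≠ 0) {f' : T →ₗ[A] N} (hf' : f' ≠ 0) :
    ∃ e : M ≃ₗ[A] N, e.toLinearMap ∘ₗ f = f' := by
  obtain ⟨I, _, _, _, ι, hι⟩ := hN.exists_injective_hull T
  obtain ⟨a, ha, ha_comp⟩ := exists_injective_comp_eq hι hf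
  obtain ⟨b, hb, hb_comp⟩ := exists_injective_comp_eq hι hf'
  have h_range : LinearMap.range a = LinearMap.range b :=
    IsUniserialModule.eq_of_natLength_eq (by
      rw [natLength_range_of_injective ha, natLength_range_of_injective hb, h_len])
  let e := LinearEquiv.ofInjective a ha ≪≫ₗ LinearEquiv.ofEq _ _ h_range ≪≫ₗ
    (LinearEquiv.ofInjective b hb).symm
  have h_comp : b ∘ₗ e.toLinearMap = a :=
    LinearMap.ext fun m => congrArg Subtype.val ((LinearEquiv.ofInjective b hb).apply_symm_apply _)
  refine ⟨e, (LinearMap.cancel_left hb).1 ?_⟩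
  rw [← LinearMap.comp_assoc, h_comp, ha_comp, hb_comp]

lemma nonempty_linearEquiv_of_top (hN : IsNakayama A) (h_len : natLength A M = natLength A N)
    {g : M →ₗ[A] U} (hg : g ≠ 0) {g' : N →ₗ[A] U} (hg' : g' ≠ 0) : Nonempty (M ≃ₗ[A] N) := by
  obtain ⟨P, _, _, _, π, hπ⟩ := hN.exists_projective_cover U
  obtain ⟨a, ha, -⟩ := exists_surjective_comp_eq hπ hg
  obtain ⟨b, hb, -⟩ := exists_surjective_comp_eq hπ hg'
  have h_ker : LinearMap.ker a = LinearMap.ker b := by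
    have ha_len := natLength_ker_add_of_surjective ha
    have hb_len := natLength_ker_add_of_surjective hb
    exact IsUniserialModule.eq_of_natLength_eq (by omega)
  exact ⟨(a.quotKerEquivOfSurjective ha).symm ≪≫ₗ Submodule.quotEquivOfEq _ _ h_ker ≪≫ₗ
    b.quotKerEquivOfSurjective hb⟩

variable {V : Type} [AddCommGroup V] [Module A V] [IsSimpleModule A V]

lemma nonempty_linearEquiv_of_isArrow_left (hN : IsNakayama A) (hU : IsArrow A U T)
    (hV : IsArrow A V T) : Nonempty (U ≃ₗ[A] V) := by
  obtain ⟨E, _, _, h_len, ⟨g, hg⟩, f, hf⟩ := hU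
  obtain ⟨E', _, _, h_len', ⟨g', hg'⟩, f', hf'⟩ := hV
  obtain ⟨e, -⟩ := hN.exists_linearEquiv_of_socle (h_len.trans h_len'.symm) hf hf'
  exact IsUniserialModule.nonempty_linearEquiv_of_quotient hg
    (comp_ne_zero_of_surjective (f := e.toLinearMap) e.surjective hg')

lemma nonempty_linearEquiv_of_isArrow_right (hN : IsNakayama A) (hT : IsArrow A U T)
    (hV : IsArrow A U V) : Nonempty (T ≃ₗ[A] V) := by
  obtain ⟨E, _, _, h_len, ⟨g, hg⟩, f, hf⟩ := hT
  obtain ⟨E', _, _, h_len', ⟨g', hg'⟩, f', hf'⟩ := hV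
  obtain ⟨e⟩ := hN.nonempty_linearEquiv_of_top (h_len.trans h_len'.symm) hg hg'
  exact IsUniserialModule.nonempty_linearEquiv_of_submodule
    (comp_ne_zero_of_injective (g := e.toLinearMap) e.injective hf) hf'

end Unique

end IsNakayama

end Arrow

section AlmostSplit

variable {A : Type} [Ring A] [IsArtinianRing A] {T U E : Type} [AddCommGroup T] [Module A T]
  [IsSimpleModule A T] [AddCommGroup U] [Module A U] [IsSimpleModule A U] [AddCommGroup E]
  [Module A E] [Module.Finite A E] [IsUniserialModule A E]

lemma isSemisimpleModule_quotient_jacobson_smul (Z : Type) [AddCommGroup Z] [Module A Z] :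
    IsSemisimpleModule A (Z ⧸ (Ring.jacobson A • (⊤ : Submodule A Z))) := by
  have h_torsion : Module.IsTorsionBySet A (Z ⧸ (Ring.jacobson A • (⊤ : Submodule A Z)))
      (Ring.jacobson A) :=
    (Module.isTorsionBySet_quotient_iff _ _).2 fun z _ hr => Submodule.smul_mem_smul hr trivial
  rw [← h_torsion.isSemisimpleModule_iff]
  infer_instance

lemma exists_fg_mem_smul {R M : Type*} [Ring R] [AddCommGroup M] [Module R M] {I : Ideal R} {z : M}
    (hz : z ∈ I • (⊤ : Submodule R M)) : ∃ K : Submodule R M, K.FG ∧ z ∈ I • K := by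
  refine Submodule.smul_induction_on hz (fun r hr m _ => ?_) ?_
  · exact ⟨R ∙ m, Submodule.fg_span_singleton m,
      Submodule.smul_mem_smul hr (Submodule.mem_span_singleton_self m)⟩
  · rintro x y ⟨K, hK, hx⟩ ⟨L, hL, hy⟩
    exact ⟨K ⊔ L, hK.sup hL, Submodule.add_mem _ (Submodule.smul_mono le_rfl le_sup_left hx)
      (Submodule.smul_mono le_rfl le_sup_right hy)⟩

lemma mem_jacobson_of_not_split {Z : Type} [AddCommGroup Z] [Module A Z] {f : T →ₗ[A] Z}
    (hf : ¬ ∃ r : Z →ₗ[A] T, r ∘ₗ f = LinearMap.id) (t : T) :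
    f t ∈ Ring.jacobson A • (⊤ : Submodule A Z) := by
  have := isSemisimpleModule_quotient_jacobson_smul (A := A) Z
  have h_zero : (Ring.jacobson A • (⊤ : Submodule A Z)).mkQ ∘ₗ f = 0 := by
    by_contra h
    obtain ⟨r, hr⟩ := IsSemisimpleModule.extension_property _ (LinearMap.injective_of_ne_zero h)
      LinearMap.id
    exact hf ⟨r ∘ₗ Submodule.mkQ _, hr⟩
  simpa using LinearMap.congr_fun h_zero t

lemma IsNakayama.exists_comp_eq_of_uniserial (hN : IsNakayama A) (h_len : natLength A E = 2)
    {f₀ : T →ₗ[A] E} (hf₀ : f₀ ≠ 0) {Z : Type} [AddCommGroup Z] [Module A Z] [Module.Finite A Z]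
    [IsUniserialModule A Z] {f : T →ₗ[A] Z} (hf : ∀ t, f t ∈ Module.jacobson A Z) (hf_ne : f ≠ 0) :
    ∃ k : E →ₗ[A] Z, k ∘ₗ f₀ = f := by
  have h_range : natLength A (LinearMap.range f) = 1 :=
    (natLength_range_of_injective (LinearMap.injective_of_ne_zero hf_ne)).trans
      natLength_of_isSimpleModule
  have h_two : 2 ≤ natLength A Z := by
    have h_pos := natLength_le_of_injective (LinearMap.range f).injective_subtype
    by_contra! h
    have : IsSimpleModule A Z := (natLength_eq_one_iff (R := A)).1 (by omega)
    exact hf_ne (LinearMap.ext fun t => by simpa [IsSimpleModule.jacobson_eq_bot] using hf t)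
  obtain ⟨L, hL⟩ := exists_submodule_natLength_eq h_two
  have h_le : LinearMap.range f ≤ L := IsUniserialModule.le_of_natLength_le (by omega)
  let f' : T →ₗ[A] L := f.codRestrict L fun t => h_le (LinearMap.mem_range_self f t)
  have hf' : L.subtype ∘ₗ f' = f := f.subtype_comp_codRestrict L _
  have hf'_ne : f' ≠ 0 := by
    rintro h
    rw [h, LinearMap.comp_zero] at hf'
    exact hf_ne hf'.symm
  obtain ⟨e, he⟩ := hN.exists_linearEquiv_of_socle (h_len.trans hL.symm) hf₀ hf'_ne
  exact ⟨L.subtype ∘ₗ e.toLinearMap, by rw [LinearMap.comp_assoc, he, hf']⟩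

lemma IsNakayama.exists_comp_eq_of_mem_jacobson (hN : IsNakayama A) (h_len : natLength A E = 2)
    {f₀ : T →ₗ[A] E} (hf₀ : f₀ ≠ 0) {Z : Type} [AddCommGroup Z] [Module A Z] [Module.Finite A Z]
    {f : T →ₗ[A] Z} (hf : ∀ t, f t ∈ Module.jacobson A Z) : ∃ k : E →ₗ[A] Z, k ∘ₗ f₀ = f := by
  induction h : natLength A Z using Nat.strong_induction_on generalizing Z with
  | _ n ih =>
    rcases eq_or_ne f 0 with rfl | hf_ne
    · exact ⟨0, LinearMap.zero_comp _⟩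
    by_cases h_indec : ∀ K L : Submodule A Z, IsCompl K L → K = ⊥ ∨ L = ⊥
    · have := hN.isUniserialModule h_indec
      exact hN.exists_comp_eq_of_uniserial h_len hf₀ hf hf_ne
    · push Not at h_indec
      obtain ⟨K, L, h_compl, hK, hL⟩ := h_indec
      have h_factor {N N' : Submodule A Z} (h_compl : IsCompl N N') (hN' : N' ≠ ⊥) :
          ∃ k : E →ₗ[A] N, k ∘ₗ f₀ = N.projectionOnto N' h_compl ∘ₗ f :=
        ih (natLength A N)
          (h ▸ natLength_lt fun h_top => hN' (eq_bot_of_isCompl_top (h_top ▸ h_compl).symm))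
          (fun t => Module.le_comap_jacobson (N.projectionOnto N' h_compl) (hf t)) rfl
      obtain ⟨k, hk⟩ := h_factor h_compl hL
      obtain ⟨l, hl⟩ := h_factor h_compl.symm hK
      refine ⟨K.subtype ∘ₗ k + L.subtype ∘ₗ l, ?_⟩
      rw [LinearMap.add_comp, LinearMap.comp_assoc, hk, LinearMap.comp_assoc, hl]
      exact LinearMap.ext fun t => Submodule.projection_add_projection_eq_self h_compl (f t)

lemma IsNakayama.exists_comp_eq_of_not_split_mono (hN : IsNakayama A) (h_len : natLength A E = 2)
    {f₀ : T →ₗ[A] E} (hf₀ : f₀ ≠ 0) {Z : Type} [AddCommGroup Z] [Module A Z] {f : T →ₗ[A] Z}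
    (hf : ¬ ∃ r : Z →ₗ[A] T, r ∘ₗ f = LinearMap.id) : ∃ k : E →ₗ[A] Z, k ∘ₗ f₀ = f := by
  have := IsSimpleModule.nontrivial A T
  obtain ⟨t₀, ht₀⟩ := exists_ne (0 : T)
  obtain ⟨K, hK_fg, hK⟩ := exists_fg_mem_smul (mem_jacobson_of_not_split hf t₀)
  have : Module.Finite A K := Module.Finite.iff_fg.2 hK_fg
  have h_comap : (Ring.jacobson A • K).comap f = ⊤ :=
    (eq_bot_or_eq_top _).resolve_left fun h => ht₀ ((Submodule.mem_bot A).1 (h ▸ hK))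
  have h_mem (t : T) : f t ∈ Ring.jacobson A • K :=
    (h_comap.ge trivial : t ∈ (Ring.jacobson A • K).comap f)
  have h_map : Ring.jacobson A • K = (Ring.jacobson A • (⊤ : Submodule A K)).map K.subtype := by
    rw [Submodule.map_smul'', Submodule.map_subtype_top]
  let f' : T →ₗ[A] K := f.codRestrict K fun t => Submodule.smul_le_right (h_mem t)
  obtain ⟨k, hk⟩ := hN.exists_comp_eq_of_mem_jacobson h_len hf₀ (f := f') fun t => by
    obtain ⟨x, hx, hxt⟩ := h_map ▸ h_mem t
    obtain rfl : x = f' t := Subtype.ext hxt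
    exact Ring.jacobson_smul_top_le A K hx
  exact ⟨K.subtype ∘ₗ k, by rw [LinearMap.comp_assoc, hk]; exact f.subtype_comp_codRestrict K _⟩

lemma range_eq_ker_of_natLength_eq_two (h_len : natLength A E = 2) {f : T →ₗ[A] E} (hf : f ≠ 0)
    {g : E →ₗ[A] U} (hg : g ≠ 0) : LinearMap.range f = LinearMap.ker g := by
  have h_range := natLength_range_of_injective (LinearMap.injective_of_ne_zero hf)
  have h_ker := natLength_ker_add_one hg
  rw [natLength_of_isSimpleModule (M := T)] at h_range
  exact IsUniserialModule.eq_of_natLength_eq (by omega)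

-- Pull `g` back along `h`: if the inclusion of `T` into the pullback splits, `h` lifts to `E`;
-- otherwise it factors through `f`, and projecting the factorization to `X` splits `h`.
lemma IsNakayama.exists_comp_eq_of_not_split_epi (hN : IsNakayama A) (h_len : natLength A E = 2)
    {f : T →ₗ[A] E} (hf : f ≠ 0) {g : E →ₗ[A] U} (hg : g ≠ 0) {X : Type} [AddCommGroup X]
    [Module A X] {h : X →ₗ[A] U} (hh : ¬ ∃ s : U →ₗ[A] X, h ∘ₗ s = LinearMap.id) :
    ∃ k : X →ₗ[A] E, g ∘ₗ k = h := by
  have hg_surj := LinearMap.surjective_of_ne_zero hg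
  have h_exact := range_eq_ker_of_natLength_eq_two h_len hf hg
  obtain ⟨Z, p, q, j, h_square, hpj, hq_surj, hq_exact⟩ :=
    exists_pullback_of_range_eq_ker h_exact hg_surj h
  by_cases h_split : ∃ r : Z →ₗ[A] T, r ∘ₗ j = LinearMap.id
  · obtain ⟨r, hr⟩ := h_split
    obtain ⟨k, hk⟩ := exists_comp_eq_of_ker_le hq_surj (g := p - f ∘ₗ r) (by
      rw [← hq_exact]
      rintro _ ⟨t, rfl⟩
      have h_retract : r (j t) = t := LinearMap.congr_fun hr t
      simp [hpj, h_retract])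
    refine ⟨k, (LinearMap.cancel_right hq_surj).1 (LinearMap.ext fun z => ?_)⟩
    have hgf (t : T) : g (f t) = 0 := LinearMap.mem_ker.1 (h_exact ▸ LinearMap.mem_range_self f t)
    rw [LinearMap.comp_assoc, hk]
    simp [hgf, h_square]
  · obtain ⟨k, hk⟩ := hN.exists_comp_eq_of_not_split_mono h_len hf h_split
    have h_fix : (p ∘ₗ k) ∘ₗ f = f := by
      rw [LinearMap.comp_assoc, hk]
      exact LinearMap.ext hpj
    let e : E ≃ₗ[A] E := LinearEquiv.ofBijective (p ∘ₗ k)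
      (IsArtinian.bijective_of_injective_endomorphism _
        (IsUniserialModule.injective_of_comp_ne_zero (h_fix ▸ hf)))
    obtain ⟨s, hs⟩ := exists_comp_eq_of_ker_le hg_surj (g := q ∘ₗ k ∘ₗ e.symm.toLinearMap) (by
      rw [← h_exact]
      rintro _ ⟨t, rfl⟩
      have h_symm : e.symm (f t) = f t := e.symm_apply_eq.2 (LinearMap.congr_fun h_fix t).symm
      have h_zero : q (j t) = 0 := LinearMap.mem_ker.1 (hq_exact ▸ LinearMap.mem_range_self j t)
      have h_comp : k (f t) = j t := LinearMap.congr_fun hk t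
      simp [h_symm, h_comp, h_zero])
    refine absurd ⟨s, (LinearMap.cancel_right hg_surj).1 (LinearMap.ext fun x => ?_)⟩ hh
    rw [LinearMap.comp_assoc, hs]
    exact (h_square _).symm.trans (congrArg g (e.apply_symm_apply x))

end AlmostSplit

section AuslanderReiten

variable {A : Type} [Ring A]

lemma indec_of_isSimpleModule (T : ModuleCat.{0} A) [IsSimpleModule A T] : Indec A T :=
  ⟨IsSimpleModule.nontrivial A T, fun K _ h => (eq_bot_or_eq_top K).imp id fun hK =>
    eq_bot_of_isCompl_top (hK ▸ h).symm⟩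

lemma exists_section_of_simple_submodule {E U : Type} [AddCommGroup E] [Module A E]
    [AddCommGroup U] [Module A U] [IsSimpleModule A U] {g : E →ₗ[A] U} {K : Submodule A E}
    [IsSimpleModule A K] (h : g ∘ₗ K.subtype ≠ 0) :
    ∃ s : U →ₗ[A] E, g ∘ₗ s = LinearMap.id :=
  let e := LinearEquiv.ofBijective _ (LinearMap.bijective_of_ne_zero h)
  ⟨K.subtype ∘ₗ e.symm.toLinearMap, LinearMap.ext e.apply_symm_apply⟩

lemma exists_section_iff {X Y : ModuleCat.{0} A} (g : X ⟶ Y) :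
    (∃ s : Y ⟶ X, s ≫ g = 𝟙 Y) ↔ ∃ s : Y →ₗ[A] X, g.hom ∘ₗ s = LinearMap.id :=
  ⟨fun ⟨s, hs⟩ => ⟨s.hom, congrArg ModuleCat.Hom.hom hs⟩,
    fun ⟨s, hs⟩ => ⟨ModuleCat.ofHom s, ModuleCat.hom_ext hs⟩⟩

variable [IsArtinianRing A]

lemma isUniserialModule_of_not_split {E U : Type} [AddCommGroup E] [Module A E] [Module.Finite A E]
    [AddCommGroup U] [Module A U] [IsSimpleModule A U] (h_len : natLength A E = 2) {g : E →ₗ[A] U}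
    (hg : g ≠ 0) (h_split : ¬ ∃ s : U →ₗ[A] E, g ∘ₗ s = LinearMap.id) :
    IsUniserialModule A E := by
  have h_ker := natLength_ker_add_one hg
  have h_simple {K : Submodule A E} (hK : K ≠ ⊥) (hK_top : K ≠ ⊤) : natLength A K = 1 := by
    have h_pos := (natLength_pos_iff (R := A)).2 (Submodule.nontrivial_iff_ne_bot.2 hK)
    have h_lt := natLength_lt hK_top
    omega
  have h_le_ker {K : Submodule A E} (hK_top : K ≠ ⊤) : K ≤ LinearMap.ker g := by
    rcases eq_or_ne K ⊥ with rfl | hK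
    · exact bot_le
    have : IsSimpleModule A K := natLength_eq_one_iff.1 (h_simple hK hK_top)
    by_contra h
    refine h_split (exists_section_of_simple_submodule (K := K) fun h_zero => h ?_)
    rwa [← LinearMap.range_le_ker_iff, Submodule.range_subtype] at h_zero
  have h_ker_le {K : Submodule A E} (hK : K ≠ ⊥) : LinearMap.ker g ≤ K := by
    rcases eq_or_ne K ⊤ with rfl | hK_top
    · exact le_top
    have h_one := h_simple hK hK_top
    exact (eq_of_le_of_natLength_le (h_le_ker hK_top) (by omega)).ge
  refine ⟨fun K L => ?_⟩
  rcases eq_or_ne K ⊤ with rfl | hK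
  · exact Or.inr le_top
  rcases eq_or_ne L ⊥ with rfl | hL
  · exact Or.inr bot_le
  · exact Or.inl ((h_le_ker hK).trans (h_ker_le hL))

variable {T U : ModuleCat.{0} A}

lemma isArrow_of_isTauOf [IsSimpleModule A T] [IsSimpleModule A U] (h : IsTauOf A T U) :
    IsArrow A U T := by
  obtain ⟨E, f, g, hf, hg, ⟨w, h_exact⟩, h_split, -⟩ := h
  rw [ModuleCat.mono_iff_injective] at hf
  rw [ModuleCat.epi_iff_surjective] at hg
  have h_range : LinearMap.range f.hom = LinearMap.ker g.hom :=
    h_exact.moduleCat_range_eq_ker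
  have := IsSimpleModule.nontrivial A T
  have := IsSimpleModule.nontrivial A U
  have : Module.Finite A (LinearMap.ker g.hom) :=
    h_range ▸ inferInstanceAs (Module.Finite A (LinearMap.range f.hom))
  have : Module.Finite A (E ⧸ LinearMap.ker g.hom) :=
    .equiv (g.hom.quotKerEquivOfSurjective hg).symm
  have : Module.Finite A E := .of_submodule_quotient (LinearMap.ker g.hom)
  have hf_ne : f.hom ≠ 0 :=
    comp_ne_zero_of_injective hf (linearEquiv_ne_zero (LinearEquiv.refl A T))
  have hg_ne : g.hom ≠ 0 :=
    comp_ne_zero_of_surjective hg (linearEquiv_ne_zero (LinearEquiv.refl A U))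
  have h_len : natLength A E = 2 := by
    rw [← natLength_ker_add_one hg_ne, ← h_range, natLength_range_of_injective hf,
      natLength_of_isSimpleModule]
  exact ⟨E, ‹_›, isUniserialModule_of_not_split h_len hg_ne ((exists_section_iff g).not.1 h_split),
    h_len, ⟨g.hom, hg_ne⟩, f.hom, hf_ne⟩

lemma IsNakayama.isTauOf_of_isArrow (hN : IsNakayama A) [IsSimpleModule A T]
    [IsSimpleModule A U] (h : IsArrow A U T) : IsTauOf A T U := by
  obtain ⟨E, _, _, h_len, ⟨g, hg⟩, f, hf⟩ := h
  have h_exact := range_eq_ker_of_natLength_eq_two h_len hf hg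
  have w : ModuleCat.ofHom f ≫ ModuleCat.ofHom g = 0 :=
    ModuleCat.hom_ext (LinearMap.range_le_ker_iff.1 h_exact.le)
  refine ⟨E, ModuleCat.ofHom f, ModuleCat.ofHom g,
    (ModuleCat.mono_iff_injective _).2 (LinearMap.injective_of_ne_zero hf),
    (ModuleCat.epi_iff_surjective _).2 (LinearMap.surjective_of_ne_zero hg),
    ⟨w, (ShortComplex.moduleCat_exact_iff_range_eq_ker _).2 h_exact⟩, ?_,
    indec_of_isSimpleModule T, indec_of_isSimpleModule U, fun X h h_split => ?_⟩
  · intro h_split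
    obtain ⟨s, hs⟩ := (exists_section_iff _).1 h_split
    have := IsSimpleModule.nontrivial A U
    have hs_surj : Function.Surjective s := IsUniserialModule.surjective_of_comp_ne_zero
      (g := g) (hs ▸ linearEquiv_ne_zero (LinearEquiv.refl A U))
    have h_le := natLength_le_of_surjective hs_surj
    rw [h_len, natLength_of_isSimpleModule] at h_le
    omega
  · obtain ⟨k, hk⟩ := hN.exists_comp_eq_of_not_split_epi h_len hf hg
      ((exists_section_iff h).not.1 h_split)
    exact ⟨ModuleCat.ofHom k, ModuleCat.hom_ext hk⟩

end AuslanderReiten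

section SimpleClass

variable {A : Type} [Ring A]

/-- Isomorphism as an equivalence relation on the simple modules. -/
def simpleSetoid (A : Type) [Ring A] : Setoid {U : ModuleCat.{0} A // IsSimpleModule A U} where
  r U V := Nonempty (U.1 ≃ₗ[A] V.1)
  iseqv := ⟨fun U => ⟨LinearEquiv.refl A U.1⟩, fun ⟨e⟩ => ⟨e.symm⟩, fun ⟨e⟩ ⟨e'⟩ => ⟨e.trans e'⟩⟩

/-- The isomorphism classes of simple modules, which are the vertices of the quiver of `A`. -/
def SimpleClass (A : Type) [Ring A] : Type 1 :=
  Quotient (simpleSetoid A)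

namespace SimpleClass

/-- The isomorphism class of a simple module. -/
def mk (U : ModuleCat.{0} A) [hU : IsSimpleModule A U] : SimpleClass A :=
  Quotient.mk (simpleSetoid A) ⟨U, hU⟩

/-- A chosen simple module in an isomorphism class. -/
def rep (q : SimpleClass A) : ModuleCat.{0} A :=
  (Quotient.out q).1

instance (q : SimpleClass A) : IsSimpleModule A q.rep :=
  (Quotient.out q).2

lemma nonempty_rep_mk (U : ModuleCat.{0} A) [IsSimpleModule A U] :
    Nonempty ((mk U).rep ≃ₗ[A] U) :=
  Quotient.mk_out (s := simpleSetoid A) ⟨U, ‹_›⟩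

lemma eq_of_nonempty_linearEquiv {q q' : SimpleClass A} (h : Nonempty (q.rep ≃ₗ[A] q'.rep)) :
    q = q' :=
  Quotient.out_equiv_out.1 h

lemma eq_mk {q : SimpleClass A} {U : ModuleCat.{0} A} [IsSimpleModule A U]
    (e : q.rep ≃ₗ[A] U) : q = mk U :=
  eq_of_nonempty_linearEquiv ((nonempty_rep_mk U).map fun e' => e.trans e'.symm)

lemma finite_setOf_exists_ne_zero {M : Type} [AddCommGroup M] [Module A M]
    (hM : IsFiniteLength A M) : {q : SimpleClass A | ∃ f : M →ₗ[A] q.rep, f ≠ 0}.Finite := by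
  induction hM with
  | of_subsingleton => exact Set.finite_empty.subset fun q ⟨f, hf⟩ => hf (Subsingleton.elim f 0)
  | @of_simple_quotient M _ _ K _ _ ih =>
    have : IsSimpleModule A (ModuleCat.of A (M ⧸ K)) := inferInstanceAs (IsSimpleModule A (M ⧸ K))
    refine (ih.insert (mk (ModuleCat.of A (M ⧸ K)))).subset fun q ⟨f, hf⟩ => ?_
    rcases eq_or_ne (f ∘ₗ K.subtype) 0 with h | h
    · rw [← LinearMap.range_le_ker_iff, Submodule.range_subtype] at h
      have h_lift : K.liftQ f h ≠ 0 := fun h_zero =>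
        hf (by rw [← K.liftQ_mkQ f h, h_zero, LinearMap.zero_comp])
      exact Or.inl (eq_mk (LinearEquiv.ofBijective _ (LinearMap.bijective_of_ne_zero h_lift)).symm)
    · exact Or.inr ⟨_, h⟩

instance [IsArtinianRing A] : Finite (SimpleClass A) := by
  have h_len : IsFiniteLength A A := isFiniteLength_iff_isNoetherian_isArtinian.2
    ⟨inferInstance, inferInstance⟩
  refine Set.finite_univ_iff.1 ((finite_setOf_exists_ne_zero h_len).subset fun q _ => ?_)
  have := IsSimpleModule.nontrivial A q.rep
  obtain ⟨u, hu⟩ :=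
    exists_toSpanSingleton_comp_ne_zero (linearEquiv_ne_zero (LinearEquiv.refl A q.rep))
  exact ⟨_, hu⟩

end SimpleClass

end SimpleClass

/-- A periodic sequence of simple modules following the arrows of the quiver, together with their
projective covers, whose lengths form the Kupisch series of `A`. Indexing by `ℤ` rather than by
`ZMod period` makes the composition factors of a uniserial module an interval of indices. -/
structure KupischCycle (A : Type) [Ring A] where
  period : ℕ
  period_pos : 0 < period
  simple : ℤ → ModuleCat.{0} A
  isSimpleModule_simple (k : ℤ) : IsSimpleModule A (simple k)
  nonempty_simple_add_period (k : ℤ) : Nonempty (simple (k + period) ≃ₗ[A] simple k)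
  isArrow_simple (k : ℤ) : IsArrow A (simple k) (simple (k + 1))
  cover : ℤ → ModuleCat.{0} A
  finite_cover (k : ℤ) : Module.Finite A (cover k)
  isUniserialModule_cover (k : ℤ) : IsUniserialModule A (cover k)
  projective_cover (k : ℤ) : Module.Projective A (cover k)
  exists_cover_ne_zero (k : ℤ) : ∃ g : cover k →ₗ[A] simple k, g ≠ 0

section Existence

variable {A : Type} [Ring A] [IsArtinianRing A]

lemma IsNakayama.exists_isArrow_of_not_projective (hN : IsNakayama A) (q : SimpleClass A)
    (h_proj : ¬ Projective q.rep) : ∃ q' : SimpleClass A, IsArrow A q.rep q'.rep := by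
  obtain ⟨P, _, _, _, g, hg⟩ := hN.exists_projective_cover q.rep
  have h_len : 2 ≤ natLength A P := by
    by_contra! h_lt
    have h_ker := natLength_ker_add_one hg
    have : IsSimpleModule A P := natLength_eq_one_iff.1 (by omega)
    have : Module.Projective A q.rep :=
      .of_equiv (LinearEquiv.ofBijective g (LinearMap.bijective_of_ne_zero hg))
    exact h_proj ((IsProjective.iff_projective _).1 this)
  obtain ⟨T, _, h_arrow⟩ := exists_isArrow h_len hg
  obtain ⟨e⟩ := SimpleClass.nonempty_rep_mk T
  exact ⟨_, h_arrow.congr (LinearEquiv.refl A _) e.symm⟩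

lemma IsNakayama.exists_perm_isArrow (hN : IsNakayama A)
    (h_proj : ¬ ∃ S : ModuleCat.{0} A, IsSimpleModule A S ∧ Projective S) :
    ∃ π : Equiv.Perm (SimpleClass A), ∀ q, IsArrow A q.rep (π q).rep := by
  choose σ hσ using fun q : SimpleClass A =>
    hN.exists_isArrow_of_not_projective q fun h => h_proj ⟨q.rep, inferInstance, h⟩
  have h_inj : Function.Injective σ := fun q q' h => SimpleClass.eq_of_nonempty_linearEquiv
    (hN.nonempty_linearEquiv_of_isArrow_left (hσ q) (h ▸ hσ q'))
  exact ⟨.ofBijective σ (Finite.injective_iff_bijective.1 h_inj), hσ⟩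

lemma IsNakayama.exists_kupischCycle (hN : IsNakayama A)
    (h_proj : ¬ ∃ S : ModuleCat.{0} A, IsSimpleModule A S ∧ Projective S) (S : ModuleCat.{0} A)
    [IsSimpleModule A S] : ∃ c : KupischCycle A, Nonempty (S ≃ₗ[A] c.simple 0) := by
  obtain ⟨π, hπ⟩ := hN.exists_perm_isArrow h_proj
  let q (k : ℤ) : SimpleClass A := (π ^ k) (SimpleClass.mk S)
  have hq_period (k : ℤ) : q (k + orderOf π) = q k := by
    simp only [q, zpow_add, zpow_natCast, pow_orderOf_eq_one, mul_one]
  have hq_arrow (k : ℤ) : IsArrow A (q k).rep (q (k + 1)).rep := by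
    have h_succ : q (k + 1) = π (q k) := by
      simp only [q, add_comm k 1, zpow_one_add, Equiv.Perm.mul_apply]
    exact h_succ ▸ hπ (q k)
  choose P hP_fin hP_uni hP_proj g hg using fun k => hN.exists_projective_cover (q k).rep
  refine ⟨⟨orderOf π, orderOf_pos π, fun k => (q k).rep, fun _ => inferInstance, fun k => ?_,
    hq_arrow, P, hP_fin, hP_uni, hP_proj, fun k => ⟨g k, hg k⟩⟩, ?_⟩
  · rw [hq_period]
    exact ⟨LinearEquiv.refl A _⟩
  · exact (SimpleClass.nonempty_rep_mk S).map LinearEquiv.symm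

end Existence

section Segment

variable {A : Type} [Ring A]

namespace KupischCycle

attribute [instance] isSimpleModule_simple finite_cover isUniserialModule_cover projective_cover

variable (c : KupischCycle A)

/-- The index following that of the socle of `c.cover k`, so that the indices of the composition
factors of `c.cover k` form the interval `[k, c.next k)`. -/
def next (k : ℤ) : ℤ := k + natLength A (c.cover k)

/-- `M` is uniserial with composition factors `c.simple i, …, c.simple (j - 1)`, from the top to the
socle; the zero module is such a module for `i = j`. -/
structure IsSegment (i j : ℤ) (M : Type) [AddCommGroup M] [Module A M] : Prop where
  finite : Module.Finite A M
  isUniserialModule : IsUniserialModule A M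
  natCast_natLength : (natLength A M : ℤ) = j - i
  exists_ne_zero : i < j → ∃ g : M →ₗ[A] c.simple i, g ≠ 0

variable {c} {i j k : ℤ} {M N : Type} [AddCommGroup M] [Module A M] [AddCommGroup N] [Module A N]

variable (c) in
lemma isSegment_cover (i : ℤ) : c.IsSegment i (c.next i) (c.cover i) where
  finite := c.finite_cover i
  isUniserialModule := c.isUniserialModule_cover i
  natCast_natLength := (add_sub_cancel_left i _).symm
  exists_ne_zero _ := c.exists_cover_ne_zero i

variable (c) in
lemma isSegment_simple (i : ℤ) : c.IsSegment i (i + 1) (c.simple i) where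
  finite := inferInstance
  isUniserialModule := inferInstance
  natCast_natLength := by rw [natLength_of_isSimpleModule, Nat.cast_one, add_sub_cancel_left]
  exists_ne_zero _ :=
    have := IsSimpleModule.nontrivial A (c.simple i)
    ⟨_, linearEquiv_ne_zero (LinearEquiv.refl A _)⟩

namespace IsSegment

lemma congr (h : c.IsSegment i j M) (e : M ≃ₗ[A] N) : c.IsSegment i j N where
  finite := have := h.finite; .equiv e
  isUniserialModule := have := h.isUniserialModule; .of_injective e.symm.injective
  natCast_natLength := natLength_congr e ▸ h.natCast_natLength
  exists_ne_zero hij :=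
    have ⟨_, hg⟩ := h.exists_ne_zero hij
    ⟨_, comp_ne_zero_of_surjective (f := e.symm.toLinearMap) e.symm.surjective hg⟩

lemma le (h : c.IsSegment i j M) : i ≤ j := by
  have := h.natCast_natLength
  omega

variable [IsArtinianRing A]

lemma subsingleton_iff (h : c.IsSegment i j M) : Subsingleton M ↔ i = j := by
  have := h.finite
  have := h.natCast_natLength
  rw [← natLength_eq_zero_iff (R := A)]
  omega

lemma nonempty_linearEquiv (hN : IsNakayama A) (hM : c.IsSegment i j M)
    (hN' : c.IsSegment i j N) : Nonempty (M ≃ₗ[A] N) := by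
  rcases hM.le.eq_or_lt with h_eq | h_lt
  · have := hM.subsingleton_iff.2 h_eq
    have := hN'.subsingleton_iff.2 h_eq
    exact ⟨LinearEquiv.ofSubsingleton M N⟩
  · obtain ⟨g, hg⟩ := hM.exists_ne_zero h_lt
    obtain ⟨g', hg'⟩ := hN'.exists_ne_zero h_lt
    have := hM.finite
    have := hM.isUniserialModule
    have := hN'.finite
    have := hN'.isUniserialModule
    have h_len := hM.natCast_natLength.trans hN'.natCast_natLength.symm
    exact hN.nonempty_linearEquiv_of_top (Nat.cast_injective h_len) hg hg'

end IsSegment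

variable [IsArtinianRing A]

variable (c) in
lemma lt_next (i : ℤ) : i < c.next i := by
  obtain ⟨g, hg⟩ := c.exists_cover_ne_zero i
  have h_len := (c.isSegment_cover i).natCast_natLength
  have h_ker := natLength_ker_add_one hg
  omega

namespace IsSegment

lemma le_next (h : c.IsSegment i j M) : j ≤ c.next i := by
  rcases h.le.eq_or_lt with rfl | h_lt
  · exact (c.lt_next i).le
  · obtain ⟨g, hg⟩ := h.exists_ne_zero h_lt
    obtain ⟨p, hp⟩ := c.exists_cover_ne_zero i
    have := h.finite
    have := h.isUniserialModule
    obtain ⟨q, hq, -⟩ := exists_surjective_comp_eq hp hg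
    have h_le := natLength_le_of_surjective hq
    have h_len := h.natCast_natLength
    have h_len_cover := (c.isSegment_cover i).natCast_natLength
    omega

lemma projective_iff (hN : IsNakayama A) (h : c.IsSegment i j M) (hij : i < j) :
    Module.Projective A M ↔ j = c.next i := by
  constructor
  · intro h_proj
    obtain ⟨g, hg⟩ := h.exists_ne_zero hij
    obtain ⟨p, hp⟩ := c.exists_cover_ne_zero i
    have := h.finite
    obtain ⟨q, hq, -⟩ := exists_surjective_comp_eq hg hp
    have h_le := natLength_le_of_surjective hq
    have h_len := h.natCast_natLength
    have h_len_cover := (c.isSegment_cover i).natCast_natLength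
    have h_le_next := h.le_next
    omega
  · rintro rfl
    obtain ⟨e⟩ := h.nonempty_linearEquiv hN (c.isSegment_cover i)
    exact .of_equiv e.symm

lemma quotient (h : c.IsSegment i j M) {K : Submodule A M} (hK : (natLength A K : ℤ) = j - k) :
    c.IsSegment i k (M ⧸ K) := by
  have := h.finite
  have := h.isUniserialModule
  have h_len := h.natCast_natLength
  have h_add := natLength_add_natLength_quotient K
  refine ⟨inferInstance, inferInstance, by omega, fun hik => ?_⟩
  have hK_top : K ≠ ⊤ := by
    rintro rfl
    rw [natLength_top] at hK
    omega
  obtain ⟨g, hg⟩ := h.exists_ne_zero (by omega)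
  have h_le := IsUniserialModule.le_ker_of_ne_top g hK_top
  refine ⟨K.liftQ g h_le, fun h_zero => hg ?_⟩
  rw [← K.liftQ_mkQ g h_le, h_zero, LinearMap.zero_comp]

lemma radical (hN : IsNakayama A) (h : c.IsSegment i j M) {K : Submodule A M}
    (hK : (natLength A K : ℤ) = j - (i + 1)) : c.IsSegment (i + 1) j K := by
  have := h.finite
  have := h.isUniserialModule
  have h_len := h.natCast_natLength
  refine ⟨inferInstance, inferInstance, hK, fun hij => ?_⟩
  obtain ⟨g, hg⟩ := h.exists_ne_zero (by omega)
  have : Nontrivial K := (natLength_pos_iff (R := A)).1 (by omega)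
  obtain ⟨L, _⟩ := exists_isSimpleModule_quotient A K
  have := IsSimpleModule.nontrivial A (K ⧸ L)
  have h_arrow : IsArrow A (c.simple i) (K ⧸ L) :=
    isArrow_of_radical hg (by omega) (mkQ_ne_zero L)
  obtain ⟨e⟩ := hN.nonempty_linearEquiv_of_isArrow_right h_arrow (c.isArrow_simple i)
  exact ⟨_, comp_ne_zero_of_injective (g := e.toLinearMap) e.injective (mkQ_ne_zero L)⟩

lemma submodule (hN : IsNakayama A) (h : c.IsSegment i j M) {K : Submodule A M}
    (hK : (natLength A K : ℤ) = j - k) : c.IsSegment k j K := by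
  have := h.finite
  have := h.isUniserialModule
  have h_len := h.natCast_natLength
  have h_add := natLength_add_natLength_quotient K
  obtain ⟨d, rfl⟩ : ∃ d : ℕ, k = i + d := ⟨(k - i).toNat, by omega⟩
  clear h_add
  induction d generalizing K with
  | zero =>
    have h_top : K = ⊤ := eq_of_le_of_natLength_le le_top (by rw [natLength_top]; omega)
    rw [Nat.cast_zero, add_zero, h_top]
    exact h.congr Submodule.topEquiv.symm
  | succ d ih =>
    push_cast at hK ⊢
    obtain ⟨L, hL⟩ := exists_submodule_natLength_eq (R := A) (M := M) (k := natLength A K + 1)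
      (by omega)
    have hKL : K ≤ L := IsUniserialModule.le_of_natLength_le (by omega)
    let e := Submodule.comapSubtypeEquivOfLe hKL
    have h_comap : c.IsSegment (i + d + 1) j (K.comap L.subtype) :=
      (ih (by omega)).radical hN (by rw [natLength_congr e]; omega)
    exact add_assoc i d 1 ▸ h_comap.congr e

lemma exists_socle_ne_zero (hN : IsNakayama A) (h : c.IsSegment i j M) (hij : i < j) :
    ∃ f : c.simple (j - 1) →ₗ[A] M, f ≠ 0 := by
  have := h.finite
  have h_len := h.natCast_natLength
  obtain ⟨K, hK⟩ := exists_submodule_natLength_eq (R := A) (M := M) (k := 1) (by omega)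
  have hK_seg : c.IsSegment (j - 1) j K := h.submodule hN (by omega)
  obtain ⟨e⟩ := (sub_add_cancel j 1 ▸ c.isSegment_simple (j - 1)).nonempty_linearEquiv hN hK_seg
  have := IsSimpleModule.nontrivial A (c.simple (j - 1))
  exact ⟨_, comp_ne_zero_of_injective K.injective_subtype (linearEquiv_ne_zero e)⟩

lemma of_radical (hN : IsNakayama A) [Module.Finite A M] [IsUniserialModule A M]
    {K : Submodule A M} [IsSimpleModule A (M ⧸ K)] (hK : c.IsSegment (i + 1) j K)
    (hij : i + 1 < j) : c.IsSegment i j M := by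
  have h_add := natLength_add_natLength_quotient K
  have h_len := hK.natCast_natLength
  rw [natLength_of_isSimpleModule (M := M ⧸ K)] at h_add
  refine ⟨inferInstance, inferInstance, by omega, fun _ => ?_⟩
  obtain ⟨g, hg⟩ := hK.exists_ne_zero hij
  have := IsSimpleModule.nontrivial A (M ⧸ K)
  obtain ⟨e⟩ := hN.nonempty_linearEquiv_of_isArrow_left
    (isArrow_of_radical (mkQ_ne_zero K) h_add hg) (c.isArrow_simple i)
  exact ⟨_, comp_ne_zero_of_injective (g := e.toLinearMap) e.injective (mkQ_ne_zero K)⟩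

lemma of_socle_ne_zero (hN : IsNakayama A) [Module.Finite A M] [IsUniserialModule A M]
    {φ : c.simple (j - 1) →ₗ[A] M} (hφ : φ ≠ 0) : c.IsSegment (j - natLength A M) j M := by
  have h_le := natLength_le_of_injective (LinearMap.injective_of_ne_zero hφ)
  rw [natLength_of_isSimpleModule (M := c.simple (j - 1))] at h_le
  obtain ⟨l, h_len⟩ := Nat.exists_eq_add_of_le' h_le
  rw [h_len]
  clear h_le
  induction l generalizing M with
  | zero =>
    have : IsSimpleModule A M := natLength_eq_one_iff.1 h_len
    have h_seg := c.isSegment_simple (j - 1)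
    rw [sub_add_cancel] at h_seg
    exact h_seg.congr (LinearEquiv.ofBijective φ (LinearMap.bijective_of_ne_zero hφ))
  | succ l ih =>
    have : Nontrivial M := (natLength_pos_iff (R := A)).1 (by omega)
    obtain ⟨K, _⟩ := exists_isSimpleModule_quotient A M
    have h_add := natLength_add_natLength_quotient K
    rw [natLength_of_isSimpleModule (M := M ⧸ K)] at h_add
    have hK : K ≠ ⊥ := by
      rintro rfl
      rw [natLength_bot] at h_add
      omega
    have hφ_le (x : c.simple (j - 1)) : φ x ∈ K :=
      IsUniserialModule.range_le_of_ne_bot φ hK (LinearMap.mem_range_self φ x)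
    have hK_seg : c.IsSegment (j - (l + 1 + 1 : ℕ) + 1) j K := by
      have h_seg := ih (φ := φ.codRestrict K hφ_le)
        (fun h_zero => hφ (by rw [← LinearMap.subtype_comp_codRestrict φ K hφ_le, h_zero,
          LinearMap.comp_zero])) (by omega)
      rwa [Nat.cast_add_one (l + 1), ← sub_sub, sub_add_cancel]
    exact .of_radical hN hK_seg (by omega)

end IsSegment

lemma exists_isSegment (hij : i ≤ j) (hj : j ≤ c.next i) :
    ∃ M : ModuleCat.{0} A, c.IsSegment i j M := by
  have h_len := (c.isSegment_cover i).natCast_natLength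
  obtain ⟨K, hK⟩ := exists_submodule_natLength_eq (R := A) (M := c.cover i)
    (k := (c.next i - j).toNat) (by omega)
  exact ⟨ModuleCat.of A (c.cover i ⧸ K), (c.isSegment_cover i).quotient (by omega)⟩

lemma next_le_next_add_one (hN : IsNakayama A) (i : ℤ) : c.next i ≤ c.next (i + 1) := by
  have h_seg := c.isSegment_cover i
  have h_len := h_seg.natCast_natLength
  have h_lt := c.lt_next i
  obtain ⟨K, hK⟩ := exists_submodule_natLength_eq (R := A) (M := c.cover i)
    (k := (c.next i - (i + 1)).toNat) (by omega)
  exact (h_seg.radical hN (K := K) (by omega)).le_next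

lemma monotone_next (hN : IsNakayama A) : Monotone c.next :=
  monotone_int_of_le_succ (next_le_next_add_one hN)

lemma natLength_cover_le (e : c.simple i ≃ₗ[A] c.simple j) :
    natLength A (c.cover i) ≤ natLength A (c.cover j) := by
  obtain ⟨g, hg⟩ := c.exists_cover_ne_zero i
  obtain ⟨p, hp⟩ := c.exists_cover_ne_zero j
  obtain ⟨q, hq, -⟩ := exists_surjective_comp_eq hp
    (comp_ne_zero_of_injective (g := e.toLinearMap) e.injective hg)
  exact natLength_le_of_surjective hq

variable (c) in
lemma next_add_period (i : ℤ) : c.next (i + c.period) = c.next i + c.period := by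
  obtain ⟨e⟩ := c.nonempty_simple_add_period i
  have h_len := (natLength_cover_le e).antisymm (natLength_cover_le e.symm)
  rw [next, next, h_len, add_right_comm]

lemma IsSegment.injective_iff (hN : IsNakayama A) (h : c.IsSegment i j M) (hij : i < j) :
    Module.Injective A M ↔ c.next (i - 1) < j := by
  have := h.finite
  have := h.isUniserialModule
  have h_len := h.natCast_natLength
  obtain ⟨φ, hφ⟩ := h.exists_socle_ne_zero hN hij
  constructor
  · intro h_inj
    by_contra! h_le
    obtain ⟨N, hN_seg⟩ := exists_isSegment (c := c) (i := i - 1) (j := j) (by omega) h_le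
    obtain ⟨ψ, hψ⟩ := hN_seg.exists_socle_ne_zero hN (by omega)
    have := hN_seg.finite
    have := hN_seg.isUniserialModule
    obtain ⟨q, hq, -⟩ := exists_injective_comp_eq hφ hψ
    have h_len_le := natLength_le_of_injective hq
    have hN_len := hN_seg.natCast_natLength
    omega
  · intro h_lt
    obtain ⟨I, _, _, _, ι, hι⟩ := hN.exists_injective_hull (c.simple (j - 1))
    obtain ⟨q, hq, -⟩ := exists_injective_comp_eq hι hφ
    have hI_seg : c.IsSegment (j - natLength A I) j I := .of_socle_ne_zero hN hι
    have h_len_le : natLength A I ≤ natLength A M := by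
      by_contra! h_gt
      have h_next := monotone_next hN (c := c) (show j - natLength A I ≤ i - 1 by omega)
      have h_le_next := hI_seg.le_next
      omega
    let e := LinearEquiv.ofBijective q ⟨hq, surjective_of_injective_of_natLength_le hq h_len_le⟩
    exact injective_of_retract q e.symm.toLinearMap (LinearMap.ext e.symm_apply_apply)

end KupischCycle

end Segment

section ProjectiveDimension

variable {A : Type} [Ring A]

lemma projDimLE_iff {n : ℕ} {M : ModuleCat.{0} A} :
    ProjDimLE A n M ↔ HasProjectiveDimensionLT M (n + 1) := by
  have h_exact {M P : ModuleCat.{0} A} (f : P ⟶ M) (_ : Epi f) :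
      (ShortComplex.mk (kernel.ι f) f (kernel.condition f)).ShortExact :=
    { exact := ShortComplex.exact_kernel f }
  induction n generalizing M with
  | zero =>
    rw [zero_add, ← projective_iff_hasProjectiveDimensionLT_one]
    exact ⟨fun | .zero _ h => h, .zero M⟩
  | succ n ih =>
    constructor
    · rintro (_ | ⟨_, _, P, f, hP, hf, h⟩)
      exact ((h_exact f hf).hasProjectiveDimensionLT_X₃_iff n hP).2 (ih.1 h)
    · intro h
      have h_π := h_exact (Projective.π M) inferInstance
      exact .succ n M _ (Projective.π M) inferInstance inferInstance
        (ih.2 ((h_π.hasProjectiveDimensionLT_X₃_iff n inferInstance).1 h))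

lemma projDim_le_natCast_iff {n : ℕ} {M : ModuleCat.{0} A} :
    projDim A M ≤ n ↔ ProjDimLE A n M := by
  refine ⟨fun h => ?_, fun h => sInf_le ⟨n, rfl, h⟩⟩
  obtain ⟨_, ⟨m, rfl, hm⟩, h_lt⟩ := sInf_lt_iff.1 (h.trans_lt ENat.natCast_lt_succ)
  rw [projDimLE_iff] at hm ⊢
  have h_le : m ≤ n := Nat.lt_succ_iff.1 (Nat.cast_lt.1 h_lt)
  exact hasProjectiveDimensionLT_of_ge M (m + 1) (n + 1) (by omega)

lemma projDimLE_succ_iff_of_surjective {P M : ModuleCat.{0} A} [Module.Projective A P]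
    {q : P →ₗ[A] M} (hq : Function.Surjective q) (n : ℕ) :
    ProjDimLE A (n + 1) M ↔ ProjDimLE A n (ModuleCat.of A (LinearMap.ker q)) := by
  have h_exact : (ShortComplex.mk (ModuleCat.ofHom (LinearMap.ker q).subtype)
      (ModuleCat.ofHom q) (by ext x; exact x.2)).ShortExact :=
    { exact := (ShortComplex.moduleCat_exact_iff _).2 fun x hx => ⟨⟨x, hx⟩, rfl⟩
      mono_f := (ModuleCat.mono_iff_injective _).2 (LinearMap.ker q).injective_subtype
      epi_g := (ModuleCat.epi_iff_surjective _).2 hq }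
  rw [projDimLE_iff, projDimLE_iff]
  exact h_exact.hasProjectiveDimensionLT_X₃_iff n ((IsProjective.iff_projective _).1 ‹_›)

lemma projDimLE_of_subsingleton (M : ModuleCat.{0} A) [Subsingleton M] (n : ℕ) :
    ProjDimLE A n M := by
  have h_proj : Module.Projective A M :=
    .of_split (0 : M →ₗ[A] A) (0 : A →ₗ[A] M) (LinearMap.ext fun _ => Subsingleton.elim _ _)
  rw [← projDim_le_natCast_iff]
  exact (projDim_le_natCast_iff.2 (.zero M ((IsProjective.iff_projective M).1 h_proj))).trans
    (Nat.cast_le.2 n.zero_le)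

namespace KupischCycle.IsSegment

variable [IsArtinianRing A] {c : KupischCycle A} {i j : ℤ} {M : ModuleCat.{0} A}

lemma projDimLE_zero_iff (hN : IsNakayama A) (h : c.IsSegment i j M) :
    ProjDimLE A 0 M ↔ i = j ∨ j = c.next i := by
  rcases h.le.eq_or_lt with h_eq | h_lt
  · have := h.subsingleton_iff.2 h_eq
    exact iff_of_true (projDimLE_of_subsingleton M 0) (.inl h_eq)
  · rw [or_iff_right h_lt.ne, ← h.projective_iff hN h_lt, IsProjective.iff_projective]
    exact ⟨fun | .zero _ h => h, .zero M⟩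

lemma exists_projDimLE_succ_iff (hN : IsNakayama A) (h : c.IsSegment i j M) (hij : i < j) :
    ∃ K : ModuleCat.{0} A, c.IsSegment j (c.next i) K ∧
      ∀ n, ProjDimLE A (n + 1) M ↔ ProjDimLE A n K := by
  have := h.finite
  have := h.isUniserialModule
  obtain ⟨g, hg⟩ := h.exists_ne_zero hij
  obtain ⟨p, hp⟩ := c.exists_cover_ne_zero i
  obtain ⟨q, hq, -⟩ := exists_surjective_comp_eq hp hg
  have h_len := h.natCast_natLength
  have h_len_cover := (c.isSegment_cover i).natCast_natLength
  have h_ker := natLength_ker_add_of_surjective hq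
  exact ⟨ModuleCat.of A (LinearMap.ker q), (c.isSegment_cover i).submodule hN (by omega),
    projDimLE_succ_iff_of_surjective (P := c.cover i) hq⟩

-- The syzygies of `[i, j)` are `[j, f i)`, `[f i, f j)`, `[f j, f² i)`, … for `f = c.next`, and
-- the projective dimension is at most `n` if one of the first `n + 1` of them vanishes.
lemma projDimLE_iff (hN : IsNakayama A) (h : c.IsSegment i j M) {n : ℕ} :
    ProjDimLE A n M ↔ (∃ l, 2 * l ≤ n + 1 ∧ c.next^[l] i = c.next^[l] j) ∨
      ∃ l, 2 * l ≤ n ∧ c.next^[l] j = c.next^[l + 1] i := by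
  induction n generalizing i j M with
  | zero =>
    rw [h.projDimLE_zero_iff hN]
    refine or_congr ⟨fun h => ⟨0, by omega, h⟩, ?_⟩ ⟨fun h => ⟨0, le_rfl, h⟩, ?_⟩ <;>
    · rintro ⟨l, hl, h⟩
      obtain rfl : l = 0 := by omega
      exact h
  | succ n ih =>
    rcases h.le.eq_or_lt with h_eq | h_lt
    · have := h.subsingleton_iff.2 h_eq
      exact iff_of_true (projDimLE_of_subsingleton M _) (.inl ⟨0, by omega, h_eq⟩)
    · obtain ⟨K, hK, h_iff⟩ := h.exists_projDimLE_succ_iff hN h_lt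
      rw [h_iff, ih hK, or_comm]
      refine or_congr ⟨fun ⟨l, hl, h⟩ => ⟨l + 1, by omega, h⟩, ?_⟩
        (exists_congr fun l => and_congr_right' Iff.rfl)
      rintro ⟨_ | l, hl, h⟩
      · exact absurd h h_lt.ne
      · exact ⟨l, by omega, h⟩

end KupischCycle.IsSegment

end ProjectiveDimension

section Psi

variable {A : Type} [Ring A]

lemma isEssentialMono_of_isInjectiveEnvelopeHom {X I : ModuleCat.{0} A} {f : X ⟶ I}
    (h : IsInjectiveEnvelopeHom A f) : IsEssentialMono f.hom where
  injective := (ModuleCat.mono_iff_injective f).1 h.2.1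
  eq_bot_of_comap_eq_bot K hK := by
    have h_comp : Function.Injective (K.mkQ ∘ₗ f.hom) := by
      rw [← LinearMap.ker_eq_bot, LinearMap.ker_comp, Submodule.ker_mkQ, hK]
    have h_mkQ : Function.Injective K.mkQ := (ModuleCat.mono_iff_injective _).1
      (h.2.2 _ (ModuleCat.ofHom K.mkQ) ((ModuleCat.mono_iff_injective _).2 h_comp))
    rwa [← LinearMap.ker_eq_bot, Submodule.ker_mkQ] at h_mkQ

lemma IsSimpleTopOf.exists_ne_zero {M T : ModuleCat.{0} A} (h : IsSimpleTopOf A M T) :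
    ∃ g : M →ₗ[A] T, g ≠ 0 := by
  obtain ⟨_, g, hg, -⟩ := h
  have := IsSimpleModule.nontrivial A T
  exact ⟨g.hom, comp_ne_zero_of_surjective ((ModuleCat.epi_iff_surjective g).1 hg)
    (linearEquiv_ne_zero (.refl A T))⟩

variable [IsArtinianRing A]

lemma IsNakayama.exists_ne_zero_of_isInjEnvOf (hN : IsNakayama A) {X I : ModuleCat.{0} A}
    [IsSimpleModule A X] (h : IsInjEnvOf A X I) : Module.Finite A I ∧ IsUniserialModule A I ∧
      Module.Injective A I ∧ ∃ f : X →ₗ[A] I, f ≠ 0 := by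
  obtain ⟨f, hf⟩ := h
  have h_ess := isEssentialMono_of_isInjectiveEnvelopeHom hf
  obtain ⟨h_fin, h_uni⟩ := hN.finite_of_isEssentialMono h_ess
  have := IsSimpleModule.nontrivial A X
  exact ⟨h_fin, h_uni, (Module.injective_iff_injective_object A I).2 hf.1, f.hom,
    comp_ne_zero_of_injective h_ess.injective (linearEquiv_ne_zero (.refl A X))⟩

lemma isInjEnvOf_of_ne_zero {X I : ModuleCat.{0} A} [IsSimpleModule A X] [Module.Finite A I]
    [IsUniserialModule A I] [Module.Injective A I] {f : X →ₗ[A] I} (hf : f ≠ 0) :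
    IsInjEnvOf A X I := by
  refine ⟨ModuleCat.ofHom f, (Module.injective_iff_injective_object A I).1 ‹_›,
    (ModuleCat.mono_iff_injective _).2 (LinearMap.injective_of_ne_zero hf), fun N g hg => ?_⟩
  rw [ModuleCat.mono_iff_injective] at hg ⊢
  have := IsSimpleModule.nontrivial A X
  exact IsUniserialModule.injective_of_comp_ne_zero (f := f)
    (comp_ne_zero_of_injective hg (linearEquiv_ne_zero (.refl A X)))

lemma isSimpleTopOf_of_ne_zero {M T : ModuleCat.{0} A} [IsSimpleModule A T] [Module.Finite A M]
    [IsUniserialModule A M] {g : M →ₗ[A] T} (hg : g ≠ 0) : IsSimpleTopOf A M T := by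
  refine ⟨‹_›, ModuleCat.ofHom g,
    (ModuleCat.epi_iff_surjective _).2 (LinearMap.surjective_of_ne_zero hg), fun N k hk => ?_⟩
  rw [ModuleCat.epi_iff_surjective] at hk ⊢
  have := IsSimpleModule.nontrivial A T
  exact IsUniserialModule.surjective_of_comp_ne_zero (g := g)
    (comp_ne_zero_of_surjective hk (linearEquiv_ne_zero (.refl A T)))

namespace KupischCycle

variable {c : KupischCycle A} {i x : ℤ} {X U : ModuleCat.{0} A}

lemma exists_isSegment_of_isInjEnvOf (hN : IsNakayama A) {I : ModuleCat.{0} A}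
    [IsSimpleModule A X] (e : X ≃ₗ[A] c.simple i) (h : IsInjEnvOf A X I) :
    ∃ j, c.IsSegment j (i + 1) I ∧ c.next (j - 1) ≤ i ∧ i < c.next j ∧ j ≤ i := by
  obtain ⟨_, _, h_inj, f, hf⟩ := hN.exists_ne_zero_of_isInjEnvOf h
  have h_le := natLength_le_of_injective (LinearMap.injective_of_ne_zero hf)
  rw [natLength_of_isSimpleModule (M := X)] at h_le
  obtain ⟨φ, hφ⟩ : ∃ φ : c.simple (i + 1 - 1) →ₗ[A] I, φ ≠ 0 := by
    rw [add_sub_cancel_right]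
    exact ⟨_, comp_ne_zero_of_surjective (f := e.symm.toLinearMap) e.symm.surjective hf⟩
  have h_seg := IsSegment.of_socle_ne_zero hN hφ
  exact ⟨_, h_seg, Int.lt_add_one_iff.1 ((h_seg.injective_iff hN (by omega)).1 h_inj),
    Int.add_one_le_iff.1 h_seg.le_next, by omega⟩

lemma exists_linearEquiv_of_isPsiOf (hN : IsNakayama A) [IsSimpleModule A X]
    (e : U ≃ₗ[A] c.simple i) (h : IsPsiOf A X U) :
    ∃ x, Nonempty (X ≃ₗ[A] c.simple x) ∧ c.next i ≤ x ∧ x < c.next (i + 1) := by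
  obtain ⟨I, hI, T, hT, h_tau⟩ := h
  have := hT.1
  have : IsSimpleModule A U := .congr e
  obtain ⟨e_top⟩ := hN.nonempty_linearEquiv_of_isArrow_right
    ((isArrow_of_isTauOf h_tau).congr e (.refl A T)) (c.isArrow_simple i)
  obtain ⟨h_fin, h_uni, h_inj, f, hf⟩ := hN.exists_ne_zero_of_isInjEnvOf hI
  obtain ⟨p, hp⟩ := hT.exists_ne_zero
  have h_seg : c.IsSegment (i + 1) (i + 1 + natLength A I) I :=
    ⟨h_fin, h_uni, by omega,
      fun _ => ⟨_, comp_ne_zero_of_injective (g := e_top.toLinearMap) e_top.injective hp⟩⟩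
  have h_le := natLength_le_of_injective (LinearMap.injective_of_ne_zero hf)
  rw [natLength_of_isSimpleModule (M := X)] at h_le
  obtain ⟨φ, hφ⟩ := h_seg.exists_socle_ne_zero hN (by omega)
  have h_lt := (h_seg.injective_iff hN (by omega)).1 h_inj
  rw [add_sub_cancel_right] at h_lt
  have h_le_next := h_seg.le_next
  exact ⟨_, IsUniserialModule.nonempty_linearEquiv_of_submodule hf hφ, by omega, by omega⟩

lemma isPsiOf_of_linearEquiv (hN : IsNakayama A) (e : X ≃ₗ[A] c.simple x) (hx : c.next i ≤ x)
    (hx' : x < c.next (i + 1)) : IsPsiOf A X (c.simple i) := by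
  have : IsSimpleModule A X := .congr e
  have h_lt := c.lt_next i
  obtain ⟨I, hI⟩ := exists_isSegment (c := c) (i := i + 1) (j := x + 1) (by omega) (by omega)
  have := hI.finite
  have := hI.isUniserialModule
  have : Module.Injective A I :=
    (hI.injective_iff hN (by omega)).2 (by rw [add_sub_cancel_right]; omega)
  obtain ⟨φ, hφ⟩ := add_sub_cancel_right x 1 ▸ hI.exists_socle_ne_zero hN (by omega)
  obtain ⟨g, hg⟩ := hI.exists_ne_zero (by omega)
  exact ⟨I, isInjEnvOf_of_ne_zero (comp_ne_zero_of_surjective (f := e.toLinearMap) e.surjective hφ),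
    c.simple (i + 1), isSimpleTopOf_of_ne_zero hg, hN.isTauOf_of_isArrow (c.isArrow_simple i)⟩

end KupischCycle

end Psi

section Iterate

lemma iterate_eq_iterate_of_le {α : Type*} {f : α → α} {k m : ℕ} (hkm : k ≤ m) {u v : α}
    (h : f^[k] u = f^[k] v) : f^[m] u = f^[m] v := by
  obtain ⟨d, rfl⟩ := Nat.exists_eq_add_of_le' hkm
  rw [Function.iterate_add_apply, Function.iterate_add_apply, h]

lemma exists_lt_map_add_one_iff {α : Type*} [LinearOrder α] {g : ℤ → α} (hg : Monotone g)
    {a b : ℤ} : (∃ x, (a ≤ x ∧ x < b) ∧ g x < g (x + 1)) ↔ g a < g b := by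
  constructor
  · rintro ⟨x, ⟨hax, hxb⟩, h⟩
    exact ((hg hax).trans_lt h).trans_le (hg (Int.add_one_le_iff.2 hxb))
  · intro h
    have hab := (hg.reflect_lt h).le
    by_contra! h_step
    refine h.not_ge ?_
    induction b, hab using Int.leInduction with
    | base => exact le_rfl
    | succ b hab ih =>
      have h_last := h_step b ⟨hab, lt_add_one b⟩
      rcases lt_or_ge (g a) (g b) with h_lt | h_ge
      · exact absurd (ih h_lt fun x hx => h_step x ⟨hx.1, by omega⟩) h_lt.not_ge
      · exact h_last.trans h_ge

lemma exists_iterate_eq_iterate {f : ℤ → ℤ} {L : ℕ∞} {a b : ℤ} (hab : a ≤ b)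
    (h : ∀ x, a ≤ x → x < b → ∃ k : ℕ, (k : ℕ∞) ≤ L ∧ f^[k] x = f^[k] (x + 1)) :
    ∃ k : ℕ, (k : ℕ∞) ≤ L ∧ f^[k] a = f^[k] b := by
  induction b, hab using Int.leInduction with
  | base => exact ⟨0, bot_le, rfl⟩
  | succ b hab ih =>
    obtain ⟨k, hk, h_ab⟩ := ih fun x hax hxb => h x hax (by omega)
    obtain ⟨l, hl, h_b⟩ := h b hab (lt_add_one b)
    refine ⟨max k l, ?_, (iterate_eq_iterate_of_le (le_max_left k l) h_ab).trans
      (iterate_eq_iterate_of_le (le_max_right k l) h_b)⟩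
    exact max_rec' (fun m : ℕ => (m : ℕ∞) ≤ L) hk hl

-- A range of an iterate is determined by its image modulo `n`, and these images stabilize.
lemma exists_range_iterate_subset {n : ℕ} [NeZero n] (f : AddConstMap ℤ ℤ (n : ℤ) n) :
    ∃ N : ℕ, Set.range f^[N] ⊆ Set.range f^[N + 1] := by
  let residues (m : ℕ) : Set (ZMod n) := Int.cast '' Set.range f^[m]
  have h_anti : Antitone residues := antitone_nat_of_succ_le fun m =>
    Set.image_mono (Function.iterate_succ f m ▸ Set.range_comp_subset_range f f^[m])
  obtain ⟨N, hN⟩ := WellFoundedLT.antitone_chain_condition h_anti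
  refine ⟨N, fun y hy => ?_⟩
  obtain ⟨_, ⟨t, rfl⟩, ht⟩ : (y : ZMod n) ∈ residues (N + 1) :=
    hN (N + 1) N.le_succ ▸ Set.mem_image_of_mem _ hy
  obtain ⟨q, hq⟩ := (ZMod.intCast_eq_intCast_iff_dvd_sub _ _ _).1 ht
  refine ⟨t + q • (n : ℤ), ?_⟩
  have h_shift : f^[N + 1] (t + q • (n : ℤ)) = f^[N + 1] t + q • (n : ℤ) :=
    AddConstMapClass.map_add_zsmul (f ^ (N + 1)) t q
  rw [h_shift, smul_eq_mul]
  linarith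

lemma exists_iterate_eq_iterate_add_one {n : ℕ} [NeZero n] (f : AddConstMap ℤ ℤ (n : ℤ) n)
    (hf : Monotone f) {i j z : ℤ} (hj : f (j - 1) ≤ i) (hi : ∀ m, f^[m] i < f^[m] (i + 1))
    (hiz : i + 1 ≤ z) (hzj : z < f j) : ∃ m, f^[m] z = f^[m] (z + 1) := by
  by_contra! hz
  obtain ⟨N, hN⟩ := exists_range_iterate_subset f
  obtain ⟨t, ht⟩ := hN (Set.mem_range_self z)
  have hfN := hf.iterate N
  have h_lower : f^[N + 1] (j - 1) < f^[N + 1] t := calc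
    f^[N + 1] (j - 1) = f^[N] (f (j - 1)) := Function.iterate_succ_apply f N _
    _ ≤ f^[N] i := hfN hj
    _ < f^[N] (i + 1) := hi N
    _ ≤ f^[N] z := hfN hiz
    _ = f^[N + 1] t := ht.symm
  have h_upper : f^[N + 1] t < f^[N + 1] j := calc
    f^[N + 1] t = f^[N] z := ht
    _ < f^[N] (z + 1) := lt_of_le_of_ne (hfN (lt_add_one z).le) (hz N)
    _ ≤ f^[N] (f j) := hfN (Int.add_one_le_iff.2 hzj)
    _ = f^[N + 1] j := (Function.iterate_succ_apply f N _).symm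
  have hjt := (hf.iterate (N + 1)).reflect_lt h_lower
  have htj := (hf.iterate (N + 1)).reflect_lt h_upper
  omega

end Iterate

section PsiPath

variable {A : Type} [Ring A]

lemma psiPathTo_one_iff {U : ModuleCat.{0} A} : PsiPathTo A 1 U ↔ IsSimpleModule A U := by
  constructor
  · rintro ⟨-, d, hd, -, ⟨e⟩⟩
    have := hd 0 one_pos
    exact .congr e.symm.toLinearEquiv
  · exact fun h => ⟨le_rfl, fun _ => U, fun _ _ => h, fun k hk => by omega, ⟨Iso.refl U⟩⟩

variable [IsArtinianRing A]

namespace KupischCycle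

variable {c : KupischCycle A} {i j : ℤ} {U S : ModuleCat.{0} A}

lemma psiPathTo_add_two_iff (hN : IsNakayama A) (e : U ≃ₗ[A] c.simple i) {m : ℕ} :
    PsiPathTo A (m + 2) U ↔
      ∃ x, (c.next i ≤ x ∧ x < c.next (i + 1)) ∧ PsiPathTo A (m + 1) (c.simple x) := by
  constructor
  · rintro ⟨-, d, hd, hψ, ⟨e_last⟩⟩
    have := hd m (by omega)
    obtain ⟨x, ⟨e_x⟩, hx⟩ := exists_linearEquiv_of_isPsiOf hN
      (e_last.toLinearEquiv.trans e) (hψ m (by omega))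
    exact ⟨x, hx, by omega, d, fun k hk => hd k (by omega), fun k hk => hψ k (by omega),
      ⟨e_x.toModuleIso⟩⟩
  · rintro ⟨x, ⟨hx, hx'⟩, -, d, hd, hψ, ⟨e_x⟩⟩
    rw [add_tsub_cancel_right] at e_x
    have h_last := isPsiOf_of_linearEquiv hN e_x.toLinearEquiv hx hx'
    refine ⟨by omega, Function.update d (m + 1) (c.simple i), fun k hk => ?_, fun k hk => ?_, ?_⟩
    · rcases eq_or_ne k (m + 1) with rfl | h_ne
      · rw [Function.update_self]
        exact c.isSimpleModule_simple i
      · rw [Function.update_of_ne h_ne]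
        exact hd k (by omega)
    · rw [Function.update_of_ne (by omega)]
      rcases eq_or_ne k m with rfl | h_ne
      · rw [Function.update_self]
        exact h_last
      · rw [Function.update_of_ne (by omega)]
        exact hψ k (by omega)
    · change Nonempty (Function.update d (m + 1) (c.simple i) (m + 1) ≅ U)
      rw [Function.update_self]
      exact ⟨e.symm.toModuleIso⟩

lemma psiPathTo_add_one_iff (hN : IsNakayama A) (e : U ≃ₗ[A] c.simple i) {m : ℕ} :
    PsiPathTo A (m + 1) U ↔ c.next^[m] i < c.next^[m] (i + 1) := by
  induction m generalizing i U with
  | zero => exact iff_of_true (psiPathTo_one_iff.2 (.congr e)) (lt_add_one i)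
  | succ m ih =>
    rw [psiPathTo_add_two_iff hN e, Function.iterate_succ_apply, Function.iterate_succ_apply,
      ← exists_lt_map_add_one_iff ((monotone_next hN).iterate m)]
    exact exists_congr fun x => and_congr_right' (ih (.refl A (c.simple x)))

lemma aVal_le_natCast_iff (hN : IsNakayama A) (e : U ≃ₗ[A] c.simple i) {m : ℕ} :
    aVal A U ≤ m ↔ c.next^[m] i = c.next^[m] (i + 1) := by
  have h_mono : c.next^[m] i ≤ c.next^[m] (i + 1) :=
    (monotone_next hN).iterate m (lt_add_one i).le
  constructor
  · intro h
    by_contra h_ne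
    have h_path := (psiPathTo_add_one_iff hN e).2 (h_mono.lt_of_ne h_ne)
    have h_le : ((m + 1 : ℕ) : ℕ∞) ≤ aVal A U := le_sSup ⟨m + 1, rfl, h_path⟩
    exact Nat.not_succ_le_self m (Nat.cast_le.1 (h_le.trans h))
  · intro h_eq
    refine sSup_le ?_
    rintro _ ⟨_ | l, rfl, h_path⟩
    · exact absurd h_path.1 (by omega)
    · have h_lt := (psiPathTo_add_one_iff hN e).1 h_path
      refine Nat.cast_le.2 (Nat.lt_of_not_le fun h_le => h_lt.ne ?_)
      exact iterate_eq_iterate_of_le h_le h_eq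

lemma aVal_eq_top_iff (hN : IsNakayama A) (e : U ≃ₗ[A] c.simple i) :
    aVal A U = ⊤ ↔ ∀ m, c.next^[m] i < c.next^[m] (i + 1) := by
  rw [ENat.eq_top_iff_forall_gt]
  refine forall_congr' fun m => ?_
  rw [← not_le, aVal_le_natCast_iff hN e]
  exact ⟨((monotone_next hN).iterate m (lt_add_one i).le).lt_of_ne, LT.lt.ne⟩

lemma pos_of_aVal_eq (hN : IsNakayama A) (e : U ≃ₗ[A] c.simple i) {k : ℕ} (h : aVal A U = k) :
    0 < k := by
  refine Nat.pos_of_ne_zero fun hk => ?_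
  subst hk
  exact (lt_add_one i).ne ((aVal_le_natCast_iff hN e).1 h.le)

lemma projDim_eq_of_aVal_eq (hN : IsNakayama A) (e : S ≃ₗ[A] c.simple i) {k : ℕ}
    (h : aVal A S = k) : projDim A S = (2 * k - 1 : ℕ) := by
  have h_iff (m : ℕ) : c.next^[m] i = c.next^[m] (i + 1) ↔ k ≤ m := by
    rw [← aVal_le_natCast_iff hN e, h, Nat.cast_le]
  -- The second alternative of `IsSegment.projDimLE_iff` is excluded: `c.next` has no fixed point.
  have h_ne {l : ℕ} : c.next^[l] (i + 1) ≠ c.next^[l + 1] i := fun h_eq => by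
    have h_max := iterate_eq_iterate_of_le (v := c.next i) (le_max_left l k) h_eq
    rw [← (h_iff (max l k)).2 (le_max_right l k), ← Function.iterate_succ_apply,
      Function.iterate_succ_apply'] at h_max
    exact (c.lt_next _).ne h_max
  have h_le_iff (n : ℕ) : projDim A S ≤ n ↔ 2 * k ≤ n + 1 := by
    rw [projDim_le_natCast_iff, ((c.isSegment_simple i).congr e.symm).projDimLE_iff hN]
    constructor
    · rintro (⟨l, hl, h_eq⟩ | ⟨l, -, h_eq⟩)
      · have := (h_iff l).1 h_eq
        omega
      · exact absurd h_eq h_ne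
    · exact fun hk => .inl ⟨k, hk, (h_iff k).2 le_rfl⟩
  have h_upper := (h_le_iff (2 * k - 1)).2 (by omega)
  obtain ⟨n, hn⟩ :=
    ENat.ne_top_iff_exists.1 (ne_top_of_le_ne_top (ENat.natCast_ne_top _) h_upper)
  have h_lower := (h_le_iff n).1 hn.ge
  rw [← hn, Nat.cast_le] at h_upper
  rw [← hn, show n = 2 * k - 1 by omega]

lemma IsSegment.even_of_projDim_eq (hN : IsNakayama A) {M : ModuleCat.{0} A}
    (h : c.IsSegment i j M) (h_ne : ∀ l, c.next^[l] i ≠ c.next^[l] j) {n : ℕ}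
    (hn : projDim A M = n) : Even n := by
  have h_le_iff (m : ℕ) : n ≤ m ↔ ∃ l, 2 * l ≤ m ∧ c.next^[l] j = c.next^[l + 1] i := by
    rw [← Nat.cast_le (α := ℕ∞), ← hn, projDim_le_natCast_iff, h.projDimLE_iff hN]
    exact or_iff_right fun ⟨l, _, h_eq⟩ => h_ne l h_eq
  obtain ⟨l, hl, h_eq⟩ := (h_le_iff n).1 le_rfl
  have h_le := (h_le_iff (2 * l)).2 ⟨l, le_rfl, h_eq⟩
  exact ⟨l, by omega⟩

lemma exists_projDim_le_of_isInjEnvOf (hN : IsNakayama A) [IsSimpleModule A S]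
    (e : S ≃ₗ[A] c.simple i) (h : aVal A S = ⊤) {I : ModuleCat.{0} A} (hI : IsInjEnvOf A S I) :
    ∃ k : ℕ, (k : ℕ∞) ≤ aAlg A ∧ projDim A I ≤ (2 * k : ℕ) := by
  have h_lt := (aVal_eq_top_iff hN e).1 h
  obtain ⟨j, hI_seg, h_prev, h_next, -⟩ := exists_isSegment_of_isInjEnvOf hN e hI
  have : NeZero c.period := ⟨c.period_pos.ne'⟩
  have h_collapse (z : ℤ) (hiz : i + 1 ≤ z) (hzj : z < c.next j) :
      ∃ k : ℕ, (k : ℕ∞) ≤ aAlg A ∧ c.next^[k] z = c.next^[k] (z + 1) := by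
    have h_iff {m : ℕ} := aVal_le_natCast_iff (m := m) hN (.refl A (c.simple z))
    obtain ⟨m, hm⟩ := exists_iterate_eq_iterate_add_one ⟨c.next, c.next_add_period⟩
      (monotone_next hN) h_prev h_lt hiz hzj
    have h_top : aVal A (c.simple z) ≠ ⊤ := ne_top_of_le_ne_top (ENat.natCast_ne_top m) (h_iff.2 hm)
    obtain ⟨k, hk⟩ := ENat.ne_top_iff_exists.1 h_top
    exact ⟨k, hk ▸ le_sSup ⟨_, c.isSimpleModule_simple z, h_top, rfl⟩, h_iff.1 hk.ge⟩
  obtain ⟨k, hk, h_eq⟩ := exists_iterate_eq_iterate (Int.add_one_le_iff.2 h_next) h_collapse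
  exact ⟨k, hk, projDim_le_natCast_iff.2 ((hI_seg.projDimLE_iff hN).2 (.inr ⟨k, le_rfl, h_eq⟩))⟩

lemma even_of_aVal_eq_top (hN : IsNakayama A) (e : S ≃ₗ[A] c.simple i) (h : aVal A S = ⊤)
    {n : ℕ} (hn : projDim A S = n) : Even n :=
  ((c.isSegment_simple i).congr e.symm).even_of_projDim_eq hN
    (fun l => ((aVal_eq_top_iff hN e).1 h l).ne) hn

lemma even_of_aVal_eq_top_of_isInjEnvOf (hN : IsNakayama A) [IsSimpleModule A S]
    (e : S ≃ₗ[A] c.simple i) (h : aVal A S = ⊤) {I : ModuleCat.{0} A} (hI : IsInjEnvOf A S I)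
    {n : ℕ} (hn : projDim A I = n) : Even n := by
  obtain ⟨j, hI_seg, -, -, hji⟩ := exists_isSegment_of_isInjEnvOf hN e hI
  have h_ne (l : ℕ) : c.next^[l] j ≠ c.next^[l] (i + 1) :=
    (((monotone_next hN).iterate l hji).trans_lt ((aVal_eq_top_iff hN e).1 h l)).ne
  exact hI_seg.even_of_projDim_eq hN h_ne hn

end KupischCycle

end PsiPath

end ArtinAlg

open ArtinAlg in
theorem statement_8_general (A : Type) [Ring A] [IsArtinianRing A] (hN : IsNakayama A)
    (h_proj : ¬ ∃ S : ModuleCat.{0} A, IsSimpleModule A S ∧ Projective S)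
    (S : ModuleCat.{0} A) [IsSimpleModule A S] :
    (aVal A S ≠ ⊤ ↔ ∃ n : ℕ, projDim A S = n ∧ Odd n) ∧
    (aVal A S ≠ ⊤ → projDim A S = 2 * aVal A S - 1 ∧ projDim A S < 2 * aVal A S) ∧
    (aVal A S = ⊤ → ∀ I : ModuleCat.{0} A, IsInjEnvOf A S I →
      (∃ n : ℕ, projDim A I = n ∧ Even n) ∧ projDim A I ≤ 2 * aAlg A) := by
  obtain ⟨c, ⟨e⟩⟩ := hN.exists_kupischCycle h_proj S
  have h_finite (h : aVal A S ≠ ⊤) :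
      ∃ k : ℕ, 0 < k ∧ aVal A S = k ∧ projDim A S = (2 * k - 1 : ℕ) := by
    obtain ⟨k, hk⟩ := ENat.ne_top_iff_exists.1 h
    exact ⟨k, KupischCycle.pos_of_aVal_eq hN e hk.symm, hk.symm,
      KupischCycle.projDim_eq_of_aVal_eq hN e hk.symm⟩
  refine ⟨⟨fun h => ?_, fun ⟨n, hn, h_odd⟩ h => ?_⟩, fun h => ?_, fun h I hI => ?_⟩
  · obtain ⟨k, hk, -, h_pd⟩ := h_finite h
    exact ⟨2 * k - 1, h_pd, k - 1, by omega⟩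
  · exact Nat.not_even_iff_odd.2 h_odd (KupischCycle.even_of_aVal_eq_top hN e h hn)
  · obtain ⟨k, hk, h_aVal, h_pd⟩ := h_finite h
    rw [h_pd, h_aVal]
    norm_cast
    exact ⟨rfl, by omega⟩
  · obtain ⟨k, hk, hI_le⟩ := KupischCycle.exists_projDim_le_of_isInjEnvOf hN e h hI
    obtain ⟨n, hn⟩ := ENat.ne_top_iff_exists.1 (ne_top_of_le_ne_top (ENat.natCast_ne_top _) hI_le)
    refine ⟨⟨n, hn.symm, KupischCycle.even_of_aVal_eq_top_of_isInjEnvOf hN e h hI hn.symm⟩, ?_⟩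
    refine hI_le.trans ?_
    push_cast
    gcongr

open ArtinAlg in
/-- Let `A` be a cyclic Nakayama algebra and `S` a simple module. Then
`a(S)` is finite iff `pd S` is odd, and in that case `pd S = 2 a(S) - 1` (in particular
`pd S < 2 a(S)`). If `a(S)` is infinite, then `pd (I S)` is even and
`pd (I S) ≤ 2 a(A)`. -/
theorem statement_8 (R : Type) [CommRing R] [IsArtinianRing R]
    (A : Type) [Ring A] [Algebra R A] [Module.Finite R A]
    (hCyc : IsCyclicNakayama A)
    (S : ModuleCat.{0} A) (hS : IsSimpleModule A ↥S) :
    (aVal A S ≠ ⊤ ↔ ∃ n : ℕ, projDim A S = n ∧ Odd n) ∧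
    (aVal A S ≠ ⊤ → projDim A S = 2 * aVal A S - 1 ∧ projDim A S < 2 * aVal A S) ∧
    (aVal A S = ⊤ → ∀ I : ModuleCat.{0} A, IsInjEnvOf A S I →
      (∃ n : ℕ, projDim A I = n ∧ Even n) ∧ projDim A I ≤ 2 * aAlg A) := by
  have := IsArtinianRing.of_finite R A
  exact statement_8_general A hCyc.1 hCyc.2.2 S
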